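/- arXiv:1401.7598 — 3 statements merged into one kernel-verified Lean document; each statement's English description precedes it below -/
import Mathlib

section
/- (Erdős–Nathanson) For every integer h ≥ 2 and every real number α with 0 < α < 1/(2h−2), there exists a minimal asymptotic basis A of order h whose asymptotic density exists and equals α, i.e., lim_{n→∞} A(n)/n = α. -/
open Pointwise Filter

/-- The counting function of a set of nonnegative integers: the number of
positive elements of `A` that are at most `n`. -/
noncomputable def countingFn (A : Set ℕ) (n : ℕ) : ℕ := (A ∩ Set.Icc 1 n).ncard

/-- The Shnirel'man density `σ(A) = inf_{n ≥ 1} A(n)/n`. -/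
noncomputable def shnirelmanDensity (A : Set ℕ) : ℝ :=
  ⨅ n : {n : ℕ // 0 < n}, (countingFn A (n : ℕ) : ℝ) / ((n : ℕ) : ℝ)

/-- The lower asymptotic density `d_L(A) = liminf_{n → ∞} A(n)/n`. -/
noncomputable def lowerDensity (A : Set ℕ) : ℝ :=
  liminf (fun n : ℕ => (countingFn A n : ℝ) / (n : ℝ)) atTop

/-- `A` is an additive basis of order `h`: every nonnegative integer is the
sum of exactly `h` elements of `A` (with repetitions allowed). -/
def IsBasisOfOrder (A : Set ℕ) (h : ℕ) : Prop :=
  ∀ n : ℕ, ∃ c : Fin h → ℕ, (∀ i, c i ∈ A) ∧ ∑ i, c i = n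

/-- `A` is an asymptotic basis of order `h`: every sufficiently large integer
is the sum of exactly `h` elements of `A` (with repetitions allowed). -/
def IsAsymptoticBasisOfOrder (A : Set ℕ) (h : ℕ) : Prop :=
  ∀ᶠ n : ℕ in atTop, ∃ c : Fin h → ℕ, (∀ i, c i ∈ A) ∧ ∑ i, c i = n

/-- A minimal asymptotic basis of order `h` is an asymptotic basis of order `h`
no proper subset of which is an asymptotic basis of order `h`. -/
def IsMinimalAsymptoticBasisOfOrder (A : Set ℕ) (h : ℕ) : Prop :=
  IsAsymptoticBasisOfOrder A h ∧
    ∀ B : Set ℕ, B ⊂ A → ¬ IsAsymptoticBasisOfOrder B h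

/-- A maximal asymptotic nonbasis of order `h` is a set that is not an
asymptotic basis of order `h`, but such that adjoining any element outside it
produces an asymptotic basis of order `h`. -/
def IsMaximalAsymptoticNonbasisOfOrder (A : Set ℕ) (h : ℕ) : Prop :=
  ¬ IsAsymptoticBasisOfOrder A h ∧
    ∀ b : ℕ, b ∉ A → IsAsymptoticBasisOfOrder (A ∪ {b}) h

/-!
Write `h = k + 1`. Take a lacunary sequence `0 ∈ E` of multiples of `2 * (k + 1)`, and a set `B` of
density `α` in the residue class of `1` modulo `k + 1` that contains the residue class of `1` modulo
`(k + 1) * Q` for a large prime `Q`. A number `n ≡ 1` modulo `k + 1` is a sum of `k + 1` elements of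
`B ∪ E` only if it is an element of `B` plus `k` elements of `E`. So an element `a` becomes
indispensable for representing `n = s + t`, where `t` is a sum of `k` elements of `E` and `a` is
either `s` or `t`, as soon as all `n - σ` are removed from `B`, for `σ ≠ t` a sum of `k` elements of
`E`. This is done for infinitely many `n` for each `a`; a stage is skipped if its `s` was removed
before. By lacunarity the removed elements number only a power of `log n` up to `n`, so the density
remains `α`.

Every large number keeps a representation because it has at least two candidates whose elements of
`B` are of comparable size. These can only be lost together at a single stage, and then the
structure of `E` either identifies the number as `s + t`, or contradicts the oddness of `Q`.
-/

section Sumset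

variable {M : Type*} [AddCommMonoid M]

/-- For a set `A` of natural numbers, too, `n • A` is the `n`-fold sumset and not the dilate. -/
theorem mem_nsmul_iff_exists_fin {A : Set M} {n : ℕ} {x : M} :
    x ∈ n • A ↔ ∃ c : Fin n → M, (∀ i, c i ∈ A) ∧ ∑ i, c i = x := by
  simp only [Set.mem_nsmul, List.sum_ofFn]
  exact ⟨fun ⟨f, hf⟩ => ⟨fun i => f i, fun i => (f i).2, hf⟩,
    fun ⟨c, hc, hx⟩ => ⟨fun i => ⟨c i, hc i⟩, hx⟩⟩

theorem mem_nsmul_range_iff {ι : Type*} {e : ι → M} {k : ℕ} {x : M} :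
    x ∈ k • Set.range e ↔ ∃ C : Multiset ι, C.card = k ∧ (C.map e).sum = x := by
  induction k generalizing x with
  | zero => simp [eq_comm]
  | succ k ih =>
    simp only [succ_nsmul', Set.mem_add, Set.exists_range_iff, ih]
    constructor
    · rintro ⟨i, _, ⟨C, rfl, rfl⟩, rfl⟩
      exact ⟨i ::ₘ C, by simp, by simp⟩
    · rintro ⟨C, hC, rfl⟩
      obtain ⟨i, hi⟩ := Multiset.card_pos_iff_exists_mem.1 (k.succ_pos.trans_eq hC.symm)
      obtain ⟨D, rfl⟩ := Multiset.exists_cons_of_mem hi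
      exact ⟨i, _, ⟨D, by simpa using hC, rfl⟩, by simp⟩

theorem exists_mem_nsmul_add_nsmul_of_mem_nsmul_union {S E : Set M} {n : ℕ} {x : M}
    (hx : x ∈ n • (S ∪ E)) : ∃ i j, i + j = n ∧ x ∈ i • S + j • E := by
  induction n generalizing x with
  | zero => exact ⟨0, 0, rfl, by simpa using hx⟩
  | succ n ih =>
    rw [succ_nsmul] at hx
    obtain ⟨y, hy, a, ha, rfl⟩ := hx
    obtain ⟨i, j, rfl, hij⟩ := ih hy
    rcases ha with ha | ha
    · refine ⟨i + 1, j, by ring, ?_⟩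
      rw [succ_nsmul, add_right_comm]
      exact Set.add_mem_add hij ha
    · refine ⟨i, j + 1, by ring, ?_⟩
      rw [succ_nsmul, ← add_assoc]
      exact Set.add_mem_add hij ha

theorem mem_nsmul_inter_Iic [PartialOrder M] [CanonicallyOrderedAdd M] {A : Set M} {k : ℕ} {x : M}
    (hx : x ∈ k • A) : x ∈ k • (A ∩ Set.Iic x) := by
  induction k generalizing x with
  | zero => simpa using hx
  | succ k ih =>
    rw [succ_nsmul] at hx ⊢
    obtain ⟨y, hy, a, ha, rfl⟩ := hx
    have hsub : A ∩ Set.Iic y ⊆ A ∩ Set.Iic (y + a) :=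
      Set.inter_subset_inter_right _ (Set.Iic_subset_Iic.2 le_self_add)
    exact Set.add_mem_add (Set.nsmul_subset_nsmul_left hsub (ih hy)) ⟨ha, le_add_self⟩

end Sumset

section NatSumset

variable {A : Set ℕ} {b b' h k m r x : ℕ}

theorem isAsymptoticBasisOfOrder_iff :
    IsAsymptoticBasisOfOrder A h ↔ ∀ᶠ n in atTop, n ∈ h • A := by
  simp only [IsAsymptoticBasisOfOrder, mem_nsmul_iff_exists_fin]

theorem modEq_mul_of_mem_nsmul (hA : ∀ a ∈ A, a ≡ r [MOD m]) (hx : x ∈ k • A) :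
    x ≡ k * r [MOD m] := by
  obtain ⟨c, hc, rfl⟩ := mem_nsmul_iff_exists_fin.1 hx
  simpa using Nat.ModEq.sum (s := Finset.univ) fun i _ => hA _ (hc i)

theorem le_mul_of_mem_nsmul (hA : ∀ a ∈ A, a ≤ b) (hx : x ∈ k • A) : x ≤ k * b := by
  obtain ⟨c, hc, rfl⟩ := mem_nsmul_iff_exists_fin.1 hx
  simpa using Finset.sum_le_card_nsmul Finset.univ c b fun i _ => hA _ (hc i)

theorem eq_mul_or_add_le_of_mem_nsmul (hA : ∀ a ∈ A, a ≤ b) (hA' : ∀ a ∈ A, a ≠ b → a ≤ b')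
    (hx : x ∈ k • A) : x = k * b ∨ x + b ≤ k * b + b' := by
  induction k generalizing x with
  | zero => simp_all
  | succ k ih =>
    rw [succ_nsmul] at hx
    obtain ⟨y, hy, a, ha, rfl⟩ := hx
    have := hA a ha
    have := hA' a ha
    rw [add_one_mul]
    have := ih hy
    lia

end NatSumset

/-- `e` is lacunary with ratio `N`: each term exceeds `N` times the preceding one. -/
def IsLacunary (N : ℕ) (e : ℕ → ℕ) : Prop := ∀ i, N * e i < e (i + 1)

namespace IsLacunary

variable {N k p q b : ℕ} {e : ℕ → ℕ} {C D : Multiset ℕ} {A : Set ℕ}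

theorem strictMono (he : IsLacunary N e) (hN : 0 < N) : StrictMono e :=
  strictMono_nat_of_lt_succ fun i => (Nat.le_mul_of_pos_left _ hN).trans_lt (he i)

theorem sum_map_lt (he : IsLacunary N e) (hC0 : C ≠ 0) (hCN : C.card ≤ N) (hCb : ∀ a ∈ C, a < b) :
    (C.map e).sum < e b := by
  have hC : 0 < C.card := Multiset.card_pos.2 hC0
  obtain ⟨a, ha⟩ := Multiset.exists_mem_of_ne_zero hC0
  obtain ⟨b, rfl⟩ := Nat.exists_eq_add_one_of_ne_zero (Nat.ne_zero_of_lt (hCb a ha))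
  have hle : ∀ y ∈ C.map e, y ≤ e b := Multiset.forall_mem_map_iff.2 fun a ha =>
    (he.strictMono (hC.trans_le hCN)).monotone (Nat.le_of_lt_succ (hCb a ha))
  calc (C.map e).sum ≤ C.card * e b := by simpa using Multiset.sum_le_card_nsmul _ _ hle
    _ ≤ N * e b := Nat.mul_le_mul_right _ hCN
    _ < e (b + 1) := he b

theorem mem_of_sum_map_eq (he : IsLacunary N e) (hD0 : D ≠ 0) (hDN : D.card ≤ N)
    (hDb : ∀ a ∈ D, a ≤ b) (hb : b ∈ C) (h : (C.map e).sum = (D.map e).sum) : b ∈ D := by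
  by_contra hbD
  have hlt := he.sum_map_lt hD0 hDN fun a ha => (hDb a ha).lt_of_ne (ne_of_mem_of_not_mem ha hbD)
  exact (h ▸ hlt).not_ge (Multiset.single_le_sum (fun _ _ => Nat.zero_le _) _
    (Multiset.mem_map_of_mem e hb))

theorem eq_of_sum_map_eq (he : IsLacunary N e) (hCN : C.card ≤ N) (hCD : C.card = D.card)
    (h : (C.map e).sum = (D.map e).sum) : C = D := by
  induction n : C.card generalizing C D with
  | zero => rw [Multiset.card_eq_zero.1 n, Multiset.card_eq_zero.1 (hCD.symm.trans n)]
  | succ n ih =>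
    have hC0 : C ≠ 0 := by rintro rfl; simp at n
    have hD0 : D ≠ 0 := by rintro rfl; simp_all
    obtain ⟨b, hb, hmax⟩ := Multiset.exists_max_image id (s := C + D) (by simp [hC0])
    have hCb : ∀ a ∈ C, a ≤ b := fun a ha => hmax a (Multiset.mem_add.2 (.inl ha))
    have hDb : ∀ a ∈ D, a ≤ b := fun a ha => hmax a (Multiset.mem_add.2 (.inr ha))
    obtain ⟨hbC, hbD⟩ : b ∈ C ∧ b ∈ D := by
      rcases Multiset.mem_add.1 hb with hb | hb
      · exact ⟨hb, he.mem_of_sum_map_eq hD0 (hCD ▸ hCN) hDb hb h⟩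
      · exact ⟨he.mem_of_sum_map_eq hC0 hCN hCb hb h.symm, hb⟩
    obtain ⟨C, rfl⟩ := Multiset.exists_cons_of_mem hbC
    obtain ⟨D, rfl⟩ := Multiset.exists_cons_of_mem hbD
    simp only [Multiset.card_cons, Multiset.map_cons, Multiset.sum_cons] at *
    rw [ih (C := C) (D := D) (by lia) (by lia) (by lia) (by lia)]

theorem eq_mul_of_add_mul_eq_add_mul (he : IsLacunary N e) (hk : 2 * k ≤ N) (hpq : p ≠ q)
    {x y : ℕ} (hx : x ∈ k • Set.range e) (hy : y ∈ k • Set.range e)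
    (h : x + k * e q = y + k * e p) : x = k * e p := by
  obtain ⟨C, hC, rfl⟩ := mem_nsmul_range_iff.1 hx
  obtain ⟨D, hD, rfl⟩ := mem_nsmul_range_iff.1 hy
  have hCD : C + Multiset.replicate k q = D + Multiset.replicate k p :=
    he.eq_of_sum_map_eq (by simp; lia) (by simp [hC, hD]) (by simpa using h)
  have hle : k ≤ C.count p := by
    have hcount := congrArg (Multiset.count p) hCD
    simp only [Multiset.count_add, Multiset.count_replicate_self, Multiset.count_replicate,
      if_neg hpq.symm] at hcount
    lia
  rw [← Multiset.eq_of_le_of_card_le (Multiset.le_count_iff_replicate_le.1 hle) (by simp [hC])]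
  simp

theorem mem_of_mem_nsmul (he : IsLacunary N e) (hkN : k ≤ N) (hk : 0 < k)
    (hA : A ⊆ Set.range e) (hb : e b ∈ k • A) : e b ∈ A := by
  have hmono := he.strictMono (hk.trans_le hkN)
  by_contra hbA
  have hlt : ∀ a ∈ A ∩ Set.Iic (e b), ∃ i < b, e i = a := by
    rintro a ⟨haA, hab⟩
    obtain ⟨i, rfl⟩ := hA haA
    exact ⟨i, hmono.lt_iff_lt.1 (hab.lt_of_ne (ne_of_mem_of_not_mem haA hbA)), rfl⟩
  have hmem := mem_nsmul_inter_Iic hb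
  cases b with
  | zero =>
    have hempty : A ∩ Set.Iic (e 0) = ∅ :=
      Set.eq_empty_of_forall_notMem fun a ha => by simpa using hlt a ha
    simp [hempty, hk.ne'] at hmem
  | succ b =>
    have hle : e (b + 1) ≤ k * e b := le_mul_of_mem_nsmul (fun a ha => by
      obtain ⟨i, hi, rfl⟩ := hlt a ha
      exact hmono.monotone (Nat.le_of_lt_succ hi)) hmem
    exact (hle.trans (Nat.mul_le_mul_right _ hkN)).not_gt (he b)

end IsLacunary

section Survivors

variable {α : Type*}

/-- Stages `i` come with a key `s i` and a set `R i` to be removed. Stage `i` is active in `B` if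
its key survives the removals of the earlier active stages. -/
def IsActive (B : Set α) (s : ℕ → α) (R : ℕ → Set α) (i : ℕ) : Prop :=
  s i ∈ B ∧ ∀ j < i, IsActive B s R j → s i ∉ R j

/-- What is left of `B` after the removals `R i` of all active stages `i`. -/
def survivors (B : Set α) (s : ℕ → α) (R : ℕ → Set α) : Set α :=
  {x ∈ B | ∀ i, IsActive B s R i → x ∉ R i}

variable {B : Set α} {s : ℕ → α} {R : ℕ → Set α}

theorem IsActive.key_mem {i : ℕ} (hi : IsActive B s R i) : s i ∈ B := by
  rw [IsActive] at hi
  exact hi.1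

theorem key_mem_survivors_iff (hR : ∀ i j, i ≤ j → s i ∉ R j) {i : ℕ} :
    s i ∈ survivors B s R ↔ IsActive B s R i := by
  rw [IsActive]
  refine ⟨fun hi => ⟨hi.1, fun j _ => hi.2 j⟩, fun hi => ⟨hi.1, fun j hj => ?_⟩⟩
  exact (lt_or_ge j i).elim (fun hji => hi.2 j hji hj) (hR i j)

theorem exists_isActive_of_notMem_survivors {x : α} (hxB : x ∈ B) (hx : x ∉ survivors B s R) :
    ∃ i, IsActive B s R i ∧ x ∈ R i := by
  by_contra! h
  exact hx ⟨hxB, h⟩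

end Survivors

section Density

/-- `A` has asymptotic density `α`. -/
def HasDensity (A : Set ℕ) (α : ℝ) : Prop :=
  Tendsto (fun n : ℕ => (countingFn A n : ℝ) / n) atTop (nhds α)

variable {A B P W X Z : Set ℕ} {α γ δ ξ C : ℝ}

theorem countingFn_le_card {F : Finset ℕ} {n : ℕ} (h : ∀ x ∈ A, 0 < x → x ≤ n → x ∈ F) :
    countingFn A n ≤ F.card := by
  rw [countingFn, ← Set.ncard_coe_finset]
  exact Set.ncard_le_ncard (fun x ⟨hxA, hx0, hxn⟩ => h x hxA hx0 hxn) F.finite_toSet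

theorem countingFn_le_add (h : A ⊆ B ∪ Z) (n : ℕ) :
    countingFn A n ≤ countingFn B n + countingFn Z n := by
  have hfin (Y : Set ℕ) : (Y ∩ Set.Icc 1 n).Finite := (Set.finite_Icc 1 n).inter_of_right _
  refine (Set.ncard_le_ncard ?_ ((hfin B).union (hfin Z))).trans (Set.ncard_union_le _ _)
  rw [← Set.union_inter_distrib_right]
  exact Set.inter_subset_inter_left _ h

theorem countingFn_sdiff_add_countingFn (h : P ⊆ X) (n : ℕ) :
    countingFn (X \ P) n + countingFn P n = countingFn X n := by
  rw [countingFn, Set.inter_sdiff_distrib_right]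
  exact Set.ncard_sdiff_add_ncard_of_subset (Set.inter_subset_inter_left _ h)
    ((Set.finite_Icc 1 n).inter_of_right _)

theorem countingFn_zero (A : Set ℕ) : countingFn A 0 = 0 := by simp [countingFn]

open Classical in
theorem countingFn_succ (A : Set ℕ) (n : ℕ) :
    countingFn A (n + 1) = countingFn A n + if n + 1 ∈ A then 1 else 0 := by
  have hIcc : Set.Icc 1 (n + 1) = insert (n + 1) (Set.Icc 1 n) := by ext; simp; lia
  split_ifs with h
  · rw [countingFn, hIcc, Set.inter_insert_of_mem h, Set.ncard_insert_of_notMem (by simp)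
      ((Set.finite_Icc 1 n).inter_of_right _), countingFn]
  · rw [countingFn, hIcc, Set.inter_insert_of_notMem h, add_zero, countingFn]

open Classical in
theorem countingFn_eq_card_filter_Ioc (A : Set ℕ) (n : ℕ) :
    countingFn A n = ((Finset.Ioc 0 n).filter (· ∈ A)).card := by
  rw [countingFn, ← Set.ncard_coe_finset]
  congr 1
  ext x
  simp only [Set.mem_inter_iff, Set.mem_Icc, Finset.coe_filter, Finset.mem_Ioc, Set.mem_ofPred_eq]
  tauto

theorem hasDensity_of_abs_sub_le (h : ∀ n, |countingFn A n - α * n| ≤ C) : HasDensity A α := by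
  rw [HasDensity, tendsto_iff_dist_tendsto_zero]
  refine squeeze_zero' (.of_forall fun n => dist_nonneg) ?_
    (tendsto_const_div_atTop_nhds_zero_nat C)
  filter_upwards [eventually_gt_atTop 0] with n hn
  have hn : (0 : ℝ) < n := by exact_mod_cast hn
  rw [Real.dist_eq, div_sub' hn.ne', abs_div, abs_of_pos hn, mul_comm]
  gcongr
  exact h n

theorem hasDensity_zero_of_finite (hA : A.Finite) : HasDensity A 0 := by
  refine hasDensity_of_abs_sub_le (C := hA.toFinset.card) fun n => ?_
  simpa using countingFn_le_card fun x hx _ _ => hA.mem_toFinset.2 hx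

theorem hasDensity_modEq {m : ℕ} (hm : 0 < m) (r : ℕ) :
    HasDensity {x | x ≡ r [MOD m]} (1 / m) := by
  refine hasDensity_of_abs_sub_le (C := 1) fun n => ?_
  have hcount : (countingFn {x | x ≡ r [MOD m]} n : ℤ)
      = max (⌊((n : ℚ) - r) / m⌋ - ⌊(0 - r : ℚ) / m⌋) 0 := by
    rw [countingFn_eq_card_filter_Ioc]
    simpa using Nat.Ioc_filter_modEq_card 0 n hm r
  have hfloor : |((⌊((n : ℚ) - r) / m⌋ - ⌊(0 - r : ℚ) / m⌋ : ℤ) : ℚ) - n / m| ≤ 1 := by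
    have hdiff : ((n : ℚ) - r) / m - (0 - r) / m = n / m := by ring
    have := Int.floor_le (((n : ℚ) - r) / m)
    have := Int.lt_floor_add_one (((n : ℚ) - r) / m)
    have := Int.floor_le ((0 - r : ℚ) / m)
    have := Int.lt_floor_add_one ((0 - r : ℚ) / m)
    push_cast
    exact abs_le.2 ⟨by linarith, by linarith⟩
  have hbound : |((countingFn {x | x ≡ r [MOD m]} n : ℤ) : ℚ) - n / m| ≤ 1 := by
    rw [hcount, max_eq_left]
    · exact hfloor
    · refine sub_nonneg.2 (Int.floor_le_floor ?_)
      gcongr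
      simp
  rw [one_div, inv_mul_eq_div]
  simpa using (Rat.cast_le (K := ℝ)).2 hbound

theorem HasDensity.of_subset_union (hB : HasDensity B α) (hZ : HasDensity Z 0) (hAB : A ⊆ B ∪ Z)
    (hBA : B ⊆ A ∪ Z) : HasDensity A α := by
  refine tendsto_of_tendsto_of_tendsto_of_le_of_le (by simpa using hB.sub hZ)
    (by simpa using hB.add hZ) (fun n => ?_) fun n => ?_
  · have : (countingFn B n : ℝ) ≤ countingFn A n + countingFn Z n := by
      exact_mod_cast countingFn_le_add hBA n
    simpa only [← sub_div] using by gcongr; linarith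
  · have : (countingFn A n : ℝ) ≤ countingFn B n + countingFn Z n := by
      exact_mod_cast countingFn_le_add hAB n
    simpa only [← add_div] using by gcongr

theorem HasDensity.union_zero (hA : HasDensity A α) (hZ : HasDensity Z 0) :
    HasDensity (A ∪ Z) α :=
  hA.of_subset_union hZ subset_rfl (Set.subset_union_left.trans Set.subset_union_left)

theorem HasDensity.sdiff (hX : HasDensity X ξ) (hP : HasDensity P δ) (h : P ⊆ X) :
    HasDensity (X \ P) (ξ - δ) := by
  refine (hX.sub hP).congr fun n => ?_
  rw [← countingFn_sdiff_add_countingFn h n]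
  push_cast
  ring

theorem HasDensity.union_of_disjoint (hP : HasDensity P δ) (hW : HasDensity W γ)
    (h : Disjoint W P) : HasDensity (P ∪ W) (δ + γ) := by
  refine (hP.add hW).congr fun n => ?_
  rw [← countingFn_sdiff_add_countingFn (Set.subset_union_left (s := P) (t := W)) n,
    Set.union_sdiff_cancel_left (Set.disjoint_iff.1 h.symm)]
  push_cast
  ring

/-- An element of `X` is kept exactly when it makes `⌊γ * countingFn X n⌋₊` jump. -/
theorem exists_subset_countingFn_eq_floor (X : Set ℕ) (hγ0 : 0 ≤ γ) (hγ1 : γ ≤ 1) :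
    ∃ W ⊆ X, ∀ n, countingFn W n = ⌊γ * countingFn X n⌋₊ := by
  classical
  refine ⟨{x ∈ X | ⌊γ * countingFn X (x - 1)⌋₊ < ⌊γ * countingFn X x⌋₊}, Set.sep_subset _ _,
    fun n => ?_⟩
  induction n with
  | zero => simp [countingFn_zero]
  | succ n ih =>
    rw [countingFn_succ, ih]
    by_cases hn : n + 1 ∈ X
    · have hX : (countingFn X (n + 1) : ℝ) = countingFn X n + 1 := by simp [countingFn_succ, hn]
      have hlow : ⌊γ * countingFn X n⌋₊ ≤ ⌊γ * countingFn X (n + 1)⌋₊ := by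
        rw [hX]; gcongr; simp
      have hup : ⌊γ * countingFn X (n + 1)⌋₊ ≤ ⌊γ * countingFn X n⌋₊ + 1 := by
        rw [hX, ← Nat.floor_add_one (by positivity)]
        gcongr
        linarith
      simp only [Set.mem_sep_iff, hn, true_and, Nat.add_sub_cancel]
      split_ifs <;> lia
    · simp [countingFn_succ, hn]

theorem HasDensity.exists_subset (hX : HasDensity X ξ) (hγ0 : 0 ≤ γ) (hγ1 : γ ≤ 1) :
    ∃ W ⊆ X, HasDensity W (γ * ξ) := by
  obtain ⟨W, hWX, hW⟩ := exists_subset_countingFn_eq_floor X hγ0 hγ1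
  refine ⟨W, hWX, tendsto_of_tendsto_of_tendsto_of_le_of_le
    (by simpa using (hX.const_mul γ).sub (tendsto_const_div_atTop_nhds_zero_nat 1))
    (hX.const_mul γ) (fun n => ?_) fun n => ?_⟩
  · have := Nat.lt_floor_add_one (γ * countingFn X n)
    simpa only [hW, ← mul_div_assoc, sub_div, one_div] using
      div_le_div_of_nonneg_right (sub_le_iff_le_add.2 this.le) n.cast_nonneg
  · have := Nat.floor_le (show 0 ≤ γ * countingFn X n by positivity)
    simpa only [hW, ← mul_div_assoc] using div_le_div_of_nonneg_right this n.cast_nonneg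

theorem HasDensity.exists_between (hP : HasDensity P δ) (hX : HasDensity X ξ) (h : P ⊆ X)
    (hδ : δ ≤ α) (hξ : α ≤ ξ) : ∃ B, P ⊆ B ∧ B ⊆ X ∧ HasDensity B α := by
  obtain ⟨W, hWX, hW⟩ := (hX.sdiff hP h).exists_subset (γ := (α - δ) / (ξ - δ))
    (div_nonneg (by linarith) (by linarith)) (div_le_one_of_le₀ (by linarith) (by linarith))
  refine ⟨P ∪ W, Set.subset_union_left, Set.union_subset h (hWX.trans Set.sdiff_subset), ?_⟩
  have hα : δ + (α - δ) / (ξ - δ) * (ξ - δ) = α := by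
    rw [div_mul_cancel_of_imp fun _ => by linarith]
    ring
  exact hα ▸ hP.union_of_disjoint hW (Set.disjoint_sdiff_left.mono_left hWX)

theorem tendsto_log_add_one_pow_div (C d : ℕ) :
    Tendsto (fun n : ℕ => (C * (Nat.log 2 n + 1) ^ d : ℝ) / n) atTop (nhds 0) := by
  have hpow : Tendsto (fun L : ℕ => 2 * C * (((L + 1 : ℕ) : ℝ) ^ d / 2 ^ (L + 1))) atTop
      (nhds 0) := by
    simpa using ((tendsto_pow_const_div_const_pow_of_one_lt d one_lt_two).comp
      (tendsto_add_atTop_nat 1)).const_mul (2 * C : ℝ)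
  have hlog : Tendsto (Nat.log 2) atTop atTop :=
    tendsto_atTop_atTop.2 fun b => ⟨2 ^ b, fun n hn => Nat.le_log_of_pow_le one_lt_two hn⟩
  refine squeeze_zero' (.of_forall fun n => by positivity) ?_ (hpow.comp hlog)
  filter_upwards [eventually_gt_atTop 0] with n hn
  have hle : (2 : ℝ) ^ Nat.log 2 n ≤ n := by exact_mod_cast Nat.pow_log_le_self 2 hn.ne'
  calc (C * (Nat.log 2 n + 1) ^ d : ℝ) / n
      ≤ C * (Nat.log 2 n + 1) ^ d / 2 ^ Nat.log 2 n := by gcongr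
    _ = 2 * C * (((Nat.log 2 n + 1 : ℕ) : ℝ) ^ d / 2 ^ (Nat.log 2 n + 1)) := by
      push_cast
      field_simp
      ring

theorem hasDensity_zero_of_card_le {F : ℕ → Finset ℕ} {c d : ℕ}
    (hF : ∀ i, (F i).card ≤ c * (i + 1) ^ d)
    (hA : ∀ x ∈ A, 0 < x → ∃ i, 2 ^ i ≤ x ∧ x ∈ F i) : HasDensity A 0 := by
  refine squeeze_zero (fun n => by positivity) (fun n => ?_) (tendsto_log_add_one_pow_div c (d + 1))
  gcongr
  have hcount : countingFn A n ≤ ((Finset.range (Nat.log 2 n + 1)).biUnion F).card :=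
    countingFn_le_card fun x hx hx0 hxn => by
      obtain ⟨i, hi, hxi⟩ := hA x hx hx0
      exact Finset.mem_biUnion.2 ⟨i, Finset.mem_range.2 (Nat.lt_succ_of_le
        (Nat.le_log_of_pow_le one_lt_two (hi.trans hxn))), hxi⟩
  have hcard : ((Finset.range (Nat.log 2 n + 1)).biUnion F).card
      ≤ (Nat.log 2 n + 1) * (c * (Nat.log 2 n + 1) ^ d) := by
    refine (Finset.card_biUnion_le_card_mul _ F _ fun i hi => (hF i).trans ?_).trans_eq
      (by rw [Finset.card_range])
    gcongr
    exact Nat.le_of_lt_succ (Finset.mem_range.1 hi)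
  calc (countingFn A n : ℝ) ≤ ((Nat.log 2 n + 1) * (c * (Nat.log 2 n + 1) ^ d) : ℕ) := by
        exact_mod_cast hcount.trans hcard
    _ = c * (Nat.log 2 n + 1) ^ (d + 1) := by push_cast; ring

end Density

namespace ErdosNathanson

variable {k Q i j x x' σ : ℕ} {B : Set ℕ}

/-- The lacunary part of the basis. It is divisible by `2 * (k + 1)`, and its term of index `i` is
`2 * (k + 1) * i` modulo `2 * (k + 1) * Q`, so that indices are visible in the residues. -/
def scale (k Q : ℕ) : ℕ → ℕ
  | 0 => 0
  | i + 1 => 2 * (k + 1) * (8 * Q * (scale k Q i + 1) + (i + 1))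

section Scale

theorem scale_succ (k Q i : ℕ) :
    scale k Q (i + 1) = 2 * (k + 1) * (8 * Q * (scale k Q i + 1) + (i + 1)) := rfl

theorem scale_modEq (k Q i : ℕ) : scale k Q i ≡ 2 * (k + 1) * i [MOD 2 * (k + 1) * Q] := by
  cases i with
  | zero => rfl
  | succ i =>
    rw [scale_succ, mul_assoc 8, mul_left_comm]
    exact Nat.ModEq.mul_left' _ (Nat.modEq_of_dvd ⟨-(8 * (scale k Q i + 1)), by push_cast; ring⟩)

theorem scale_modEq_zero (k Q i : ℕ) : scale k Q i ≡ 0 [MOD 2 * (k + 1)] :=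
  ((scale_modEq k Q i).of_mul_right Q).trans (Nat.modEq_zero_iff_dvd.2 ⟨i, rfl⟩)

theorem modEq_zero_of_mem_nsmul_range_scale (hσ : σ ∈ j • Set.range (scale k Q)) :
    σ ≡ 0 [MOD 2 * (k + 1)] :=
  modEq_mul_of_mem_nsmul (Set.forall_mem_range.2 (scale_modEq_zero k Q)) hσ

theorem sixteen_mul_scale_add_le (k Q i : ℕ) :
    16 * ((k + 1) * (Q * scale k Q i)) + 16 * ((k + 1) * Q) + 2 * (i + 1) ≤ scale k Q (i + 1) := by
  rw [scale_succ]
  nlinarith [Nat.zero_le (k * i)]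

theorem self_le_scale (k Q i : ℕ) : i ≤ scale k Q i := by
  cases i with
  | zero => exact le_rfl
  | succ i => have := sixteen_mul_scale_add_le k Q i; lia

theorem isLacunary_scale (hQ : 0 < Q) : IsLacunary (2 * (k + 1)) (scale k Q) := fun i => by
  have : (k + 1) * scale k Q i ≤ (k + 1) * (Q * scale k Q i) :=
    Nat.mul_le_mul_left _ (Nat.le_mul_of_pos_left _ hQ)
  have := sixteen_mul_scale_add_le k Q i
  lia

theorem strictMono_scale (hQ : 0 < Q) : StrictMono (scale k Q) :=
  (isLacunary_scale hQ).strictMono (by positivity)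

theorem two_pow_le_scale (hQ : 0 < Q) (i : ℕ) : 2 ^ (i + 1) ≤ scale k Q (i + 1) := by
  induction i with
  | zero => have := sixteen_mul_scale_add_le k Q 0; lia
  | succ i ih =>
    have : 2 * scale k Q (i + 1) ≤ 2 * (k + 1) * scale k Q (i + 1) := by gcongr; lia
    rw [pow_succ]
    linarith [isLacunary_scale (k := k) hQ (i + 1)]

theorem le_scale_of_lt_scale_succ (hQ : 0 < Q) {a : ℕ} (ha : a ∈ Set.range (scale k Q))
    (h : a < scale k Q (i + 1)) : a ≤ scale k Q i := by
  obtain ⟨j, rfl⟩ := ha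
  exact (strictMono_scale hQ).monotone (Nat.le_of_lt_succ ((strictMono_scale hQ).lt_iff_lt.1 h))

end Scale

section Stages

open Classical in
/-- The element kept at stage `i`. The stages run through all `a : ℕ` infinitely often, with
`a = i.unpair.1` at stage `i`; the key is `a` itself unless `a` is a term of the scale. -/
noncomputable def key (k Q i : ℕ) : ℕ :=
  if i.unpair.1 ∈ Set.range (scale k Q) then 1 + (k + 1) * (Q * scale k Q (i + 1)) else i.unpair.1

open Classical in
/-- The sum of `k` scale terms added to the key of stage `i`; `key k Q i + tail k Q i` is to have
no other representation. It is `i.unpair.1` if this is a term of the scale. -/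
noncomputable def tail (k Q i : ℕ) : ℕ :=
  if i.unpair.1 ∈ Set.range (scale k Q) then i.unpair.1 else k * scale k Q (i + 1)

/-- The elements that would yield another representation of `key k Q i + tail k Q i` as a sum of
one element and `k` scale terms. -/
def removed (k Q i : ℕ) : Set ℕ :=
  {x | ∃ σ ∈ k • Set.range (scale k Q), σ ≠ tail k Q i ∧ x + σ = key k Q i + tail k Q i}

theorem key_of_mem (h : i.unpair.1 ∈ Set.range (scale k Q)) :
    key k Q i = 1 + (k + 1) * (Q * scale k Q (i + 1)) := if_pos h

theorem tail_of_mem (h : i.unpair.1 ∈ Set.range (scale k Q)) : tail k Q i = i.unpair.1 := if_pos h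

theorem key_of_notMem (h : i.unpair.1 ∉ Set.range (scale k Q)) : key k Q i = i.unpair.1 := if_neg h

theorem tail_of_notMem (h : i.unpair.1 ∉ Set.range (scale k Q)) :
    tail k Q i = k * scale k Q (i + 1) := if_neg h

theorem mul_scale_mem_nsmul (k Q i : ℕ) : k * scale k Q i ∈ k • Set.range (scale k Q) :=
  smul_eq_mul k (scale k Q i) ▸ Set.nsmul_mem_nsmul (Set.mem_range_self i)

theorem tail_mem_nsmul (hk : 0 < k) (i : ℕ) : tail k Q i ∈ k • Set.range (scale k Q) := by
  by_cases h : i.unpair.1 ∈ Set.range (scale k Q)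
  · rw [tail_of_mem h]
    exact Set.nsmul_subset_nsmul_right (s := Set.range (scale k Q)) ⟨0, rfl⟩ hk (by simpa using h)
  · rw [tail_of_notMem h]
    exact mul_scale_mem_nsmul k Q (i + 1)

theorem le_key_add_tail (hk : 0 < k) (hQ : 0 < Q) (i : ℕ) : i ≤ key k Q i + tail k Q i := by
  have hi := self_le_scale k Q (i + 1)
  by_cases h : i.unpair.1 ∈ Set.range (scale k Q)
  · rw [key_of_mem h]
    have : scale k Q (i + 1) ≤ (k + 1) * (Q * scale k Q (i + 1)) :=
      (Nat.le_mul_of_pos_left _ hQ).trans (Nat.le_mul_of_pos_left _ k.succ_pos)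
    lia
  · rw [tail_of_notMem h]
    have : scale k Q (i + 1) ≤ k * scale k Q (i + 1) := Nat.le_mul_of_pos_left _ hk
    lia

theorem eight_mul_key_add_tail_lt (hQ : 0 < Q) (i : ℕ) :
    8 * (key k Q i + tail k Q i) < scale k Q (i + 2) := by
  have hi := self_le_scale k Q (i + 1)
  have hgrowth := sixteen_mul_scale_add_le k Q (i + 1)
  have hpos : 0 < (k + 1) * Q := by positivity
  have hle : scale k Q (i + 1) ≤ Q * scale k Q (i + 1) := Nat.le_mul_of_pos_left _ hQ
  have hle' : (k + 1) * scale k Q (i + 1) ≤ (k + 1) * (Q * scale k Q (i + 1)) := by gcongr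
  have ha := i.unpair_left_le
  by_cases h : i.unpair.1 ∈ Set.range (scale k Q)
  · rw [key_of_mem h, tail_of_mem h]
    linarith [Nat.zero_le (k * scale k Q (i + 1))]
  · rw [key_of_notMem h, tail_of_notMem h]
    linarith

theorem le_key_add_tail_of_mem_removed (hx : x ∈ removed k Q i) : x ≤ key k Q i + tail k Q i := by
  obtain ⟨σ, -, -, h⟩ := hx
  exact Nat.le_of_add_right_le h.le

theorem mem_nsmul_scale_inter_Iic (hQ : 0 < Q) (hσ : σ ∈ k • Set.range (scale k Q))
    (h : σ ≤ key k Q i + tail k Q i) :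
    σ ∈ k • (Set.range (scale k Q) ∩ Set.Iic (scale k Q (i + 1))) := by
  refine Set.nsmul_subset_nsmul_left ?_ (mem_nsmul_inter_Iic hσ)
  rintro a ⟨ha, (haσ : a ≤ σ)⟩
  have hlt := eight_mul_key_add_tail_lt (k := k) hQ i
  exact ⟨ha, le_scale_of_lt_scale_succ hQ ha (by lia)⟩

theorem scale_le_two_mul_of_mem_removed (hQ : 0 < Q) (hx : x ∈ removed k Q i) :
    scale k Q (i + 1) ≤ 2 * x := by
  obtain ⟨σ, hσ, hne, hsum⟩ := hx
  replace hσ := mem_nsmul_scale_inter_Iic hQ hσ (Nat.le_of_add_left_le hsum.le)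
  by_cases h : i.unpair.1 ∈ Set.range (scale k Q)
  · have hσle : σ ≤ k * scale k Q (i + 1) := le_mul_of_mem_nsmul (fun a ha => ha.2) hσ
    have hle : (k + 1) * scale k Q (i + 1) ≤ (k + 1) * (Q * scale k Q (i + 1)) := by
      gcongr
      exact Nat.le_mul_of_pos_left _ hQ
    rw [key_of_mem h] at hsum
    linarith
  · rw [tail_of_notMem h] at hne hsum
    have hstep : scale k Q i + scale k Q i ≤ scale k Q (i + 1) := by
      have := isLacunary_scale (k := k) hQ i
      nlinarith
    rcases eq_mul_or_add_le_of_mem_nsmul (fun a ha => ha.2) (fun a ha hne =>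
      le_scale_of_lt_scale_succ hQ ha.1 (ha.2.lt_of_ne hne)) hσ with hσ | hσ
    · exact absurd hσ hne
    · lia

theorem two_mul_lt_of_mem_removed (hQ : 0 < Q) (hij : i < j) (hx : x ∈ removed k Q j) :
    2 * (key k Q i + tail k Q i) < x := by
  have := (strictMono_scale (k := k) hQ).monotone (show i + 2 ≤ j + 1 by lia)
  have := scale_le_two_mul_of_mem_removed hQ hx
  have := eight_mul_key_add_tail_lt (k := k) hQ i
  lia

theorem two_mul_mul_lt_of_mem_removed (hQ : 0 < Q) (hx : x ∈ removed k Q i) :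
    2 * ((k + 1) * Q) < x := by
  have := (strictMono_scale (k := k) hQ).monotone (show 1 ≤ i + 1 by lia)
  have := scale_le_two_mul_of_mem_removed hQ hx
  have := sixteen_mul_scale_add_le k Q 0
  lia

theorem stage_eq_of_mem_removed (hQ : 0 < Q) (hx : x ∈ removed k Q i) (hx' : x' ∈ removed k Q j)
    (hxx' : x ≤ 2 * x') (hx'x : x' ≤ 2 * x) : i = j := by
  have hxn := le_key_add_tail_of_mem_removed hx
  have hxn' := le_key_add_tail_of_mem_removed hx'
  rcases lt_trichotomy i j with hij | rfl | hij
  · have := two_mul_lt_of_mem_removed hQ hij hx'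
    lia
  · rfl
  · have := two_mul_lt_of_mem_removed hQ hij hx
    lia

theorem key_notMem_removed (hQ : 0 < Q) (hij : i ≤ j) : key k Q i ∉ removed k Q j := by
  intro hmem
  rcases hij.eq_or_lt with rfl | hij
  · obtain ⟨σ, -, hne, hsum⟩ := hmem
    exact hne (Nat.add_left_cancel hsum)
  · have := two_mul_lt_of_mem_removed hQ hij hmem
    lia

theorem key_mem_survivors_iff_isActive (hQ : 0 < Q) :
    key k Q i ∈ survivors B (key k Q) (removed k Q) ↔ IsActive B (key k Q) (removed k Q) i :=
  key_mem_survivors_iff fun _ _ => key_notMem_removed hQ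

theorem isActive_of_mem_range_scale (hQ : 0 < Q) (hB : key k Q i ∈ B)
    (h : i.unpair.1 ∈ Set.range (scale k Q)) : IsActive B (key k Q) (removed k Q) i := by
  rw [IsActive]
  refine ⟨hB, fun j hj _ hmem => ?_⟩
  have hle : scale k Q (i + 1) ≤ (k + 1) * (Q * scale k Q (i + 1)) :=
    (Nat.le_mul_of_pos_left _ hQ).trans (Nat.le_mul_of_pos_left _ k.succ_pos)
  have := le_key_add_tail_of_mem_removed hmem
  have := eight_mul_key_add_tail_lt (k := k) hQ j
  have := (strictMono_scale (k := k) hQ).monotone (show j + 2 ≤ i + 1 by lia)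
  have := key_of_mem h
  lia

theorem exists_common_stage (hQ : 0 < Q) (hx : x ∈ B \ survivors B (key k Q) (removed k Q))
    (hx' : x' ∈ B \ survivors B (key k Q) (removed k Q)) (hxx' : x ≤ 2 * x') (hx'x : x' ≤ 2 * x) :
    ∃ i, IsActive B (key k Q) (removed k Q) i ∧ x ∈ removed k Q i ∧ x' ∈ removed k Q i := by
  obtain ⟨i, hi, hxi⟩ := exists_isActive_of_notMem_survivors hx.1 hx.2
  obtain ⟨j, -, hxj⟩ := exists_isActive_of_notMem_survivors hx'.1 hx'.2
  obtain rfl := stage_eq_of_mem_removed hQ hxi hxj hxx' hx'x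
  exact ⟨i, hi, hxi, hxj⟩

end Stages

/-- A set from which the main part of the basis can be carved out: it lies in the residue class of
`1` modulo `k + 1`, and contains a full residue class modulo `(k + 1) * Q` and the first `2 * Q`
elements of its own class. -/
structure IsReservoir (k Q : ℕ) (B : Set ℕ) : Prop where
  modEq_one : ∀ x ∈ B, x ≡ 1 [MOD k + 1]
  mem_of_modEq : ∀ x, x ≡ 1 [MOD (k + 1) * Q] → x ∈ B
  mem_of_le : ∀ x ≤ 2 * ((k + 1) * Q), x ≡ 1 [MOD k + 1] → x ∈ B

theorem exists_isReservoir (hQ : 0 < Q) {α : ℝ} (hα : 1 / (((k + 1) * Q : ℕ) : ℝ) ≤ α)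
    (hα' : α ≤ 1 / ((k + 1 : ℕ) : ℝ)) : ∃ B, IsReservoir k Q B ∧ HasDensity B α := by
  obtain ⟨B, hPB, hBX, hB⟩ := (hasDensity_modEq (by positivity) 1).exists_between
    (hasDensity_modEq k.succ_pos 1) (fun x hx => Nat.ModEq.of_mul_right Q hx) hα hα'
  have hfin : {x | x ≤ 2 * ((k + 1) * Q) ∧ x ≡ 1 [MOD k + 1]}.Finite :=
    (Set.finite_Iic _).subset fun x hx => hx.1
  exact ⟨_, ⟨fun x hx => hx.elim (fun h => hBX h) And.right, fun x hx => .inl (hPB hx),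
    fun x hle hx => .inr ⟨hle, hx⟩⟩, hB.union_zero (hasDensity_zero_of_finite hfin)⟩

/-- The asymptotic basis built from the reservoir `B`: the scale together with what remains of `B`
after the removals of all active stages. -/
def basis (k Q : ℕ) (B : Set ℕ) : Set ℕ :=
  survivors B (key k Q) (removed k Q) ∪ Set.range (scale k Q)

section Representation

theorem IsReservoir.exists_add_mul_scale_eq (hB : IsReservoir k Q B) {p y : ℕ}
    (hp : 2 * k * p ≡ y [MOD Q]) (hle : k * scale k Q p ≤ y) :
    ∃ x ∈ B, x + k * scale k Q p = 1 + (k + 1) * y := by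
  obtain ⟨x, hx⟩ := Nat.exists_eq_add_of_le' (show k * scale k Q p ≤ 1 + (k + 1) * y by lia)
  have hscale : k * scale k Q p ≡ (k + 1) * y [MOD (k + 1) * Q] := calc
    k * scale k Q p ≡ k * (2 * (k + 1) * p) [MOD (k + 1) * Q] :=
      Nat.ModEq.mul_left k ((scale_modEq k Q p).of_dvd ⟨2, by ring⟩)
    _ = (k + 1) * (2 * k * p) := by ring
    _ ≡ (k + 1) * y [MOD (k + 1) * Q] := hp.mul_left' _
  exact ⟨x, hB.mem_of_modEq x
    (hscale.add_right_cancel (congrArg (· % ((k + 1) * Q)) hx.symm)), hx.symm⟩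

/-- Two candidates `x`, `x'` for the first summand cannot both be removed: they are so close that
this would happen at a common stage, and then lacunarity identifies that stage's tail. -/
theorem one_add_mul_mem_survivors_add_nsmul (hk : 0 < k) (hQ : 0 < Q) (hc : (2 * k).Coprime Q)
    (hB : IsReservoir k Q B) {y : ℕ} (hy : 2 * (k * scale k Q (2 * Q)) ≤ y) :
    1 + (k + 1) * y ∈ survivors B (key k Q) (removed k Q) + k • Set.range (scale k Q) := by
  obtain ⟨p, hpQ, hp⟩ := Nat.exists_mul_mod_eq_of_coprime y hc hQ.ne'
  have hp' : 2 * k * (p + Q) ≡ y [MOD Q] := (Nat.ModEq.mul_left _ Nat.add_modEq_right).trans hp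
  have hbound {q : ℕ} (hq : q ≤ 2 * Q) : 2 * (k * scale k Q q) ≤ y :=
    le_trans (by gcongr; exact (strictMono_scale hQ).monotone hq) hy
  have hb := hbound (q := p) (by lia)
  have hb' := hbound (q := p + Q) (by lia)
  obtain ⟨x, hxB, hx⟩ := hB.exists_add_mul_scale_eq hp (by lia)
  obtain ⟨x', hxB', hx'⟩ := hB.exists_add_mul_scale_eq hp' (by lia)
  by_cases hxS : x ∈ survivors B (key k Q) (removed k Q)
  · exact hx ▸ Set.add_mem_add hxS (mul_scale_mem_nsmul k Q p)
  by_cases hxS' : x' ∈ survivors B (key k Q) (removed k Q)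
  · exact hx' ▸ Set.add_mem_add hxS' (mul_scale_mem_nsmul k Q (p + Q))
  obtain ⟨i, hi, ⟨σ, hσ, -, hsum⟩, ⟨σ', hσ', -, hsum'⟩⟩ :=
    exists_common_stage hQ ⟨hxB, hxS⟩ ⟨hxB', hxS'⟩ (by lia) (by lia)
  have hσp : σ = k * scale k Q p :=
    (isLacunary_scale hQ).eq_mul_of_add_mul_eq_add_mul (by lia)
      (show p ≠ p + Q by lia) hσ hσ' (by lia)
  rw [← hx, ← hσp, hsum]
  exact Set.add_mem_add ((key_mem_survivors_iff_isActive hQ).2 hi) (tail_mem_nsmul hk i)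

theorem IsReservoir.exists_add_mul_eq (hB : IsReservoir k Q B) {r y : ℕ} (hr : r ≡ y [MOD Q])
    (hle : r ≤ y) : ∃ x ∈ B, x + (k + 1) * r = 1 + (k + 1) * y := by
  obtain ⟨z, rfl⟩ := Nat.exists_eq_add_of_le' hle
  have hz : z ≡ 0 [MOD Q] := Nat.ModEq.add_right_cancel' r (by simpa using hr.symm)
  exact ⟨1 + (k + 1) * z, hB.mem_of_modEq _ ((hz.mul_left' (k + 1)).add_left 1), by ring⟩

theorem exists_survivor_add_mul_eq (hQ : Odd Q) (hB : IsReservoir k Q B) {y : ℕ}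
    (hy : 4 * Q ≤ y) : ∃ x ∈ survivors B (key k Q) (removed k Q), ∃ r < 2 * Q,
      x + (k + 1) * r = 1 + (k + 1) * y := by
  have hr := Nat.mod_lt y hQ.pos
  have hbound {r : ℕ} (hr : r ≤ 2 * Q) : 2 * ((k + 1) * r) ≤ (k + 1) * y := by
    rw [mul_left_comm]
    gcongr
    lia
  have hb := hbound (r := y % Q) (by lia)
  have hb' := hbound (r := y % Q + Q) (by lia)
  obtain ⟨x, hxB, hx⟩ := hB.exists_add_mul_eq (Nat.mod_modEq y Q) (by lia)
  obtain ⟨x', hxB', hx'⟩ := hB.exists_add_mul_eq (r := y % Q + Q)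
    (Nat.add_modEq_right.trans (Nat.mod_modEq y Q)) (by lia)
  by_contra! hnot
  obtain ⟨i, -, ⟨σ, hσ, -, hsum⟩, ⟨σ', hσ', -, hsum'⟩⟩ := exists_common_stage hQ.pos
    ⟨hxB, fun hxS => hnot x hxS _ (by lia) hx⟩ ⟨hxB', fun hxS => hnot x' hxS _ (by lia) hx'⟩
    (by lia) (by lia)
  have hσQ : σ + (k + 1) * Q = σ' := by lia
  have hmod : (k + 1) * Q ≡ 0 [MOD (k + 1) * 2] := by
    have hσ0 := modEq_zero_of_mem_nsmul_range_scale hσ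
    have hσ0' := modEq_zero_of_mem_nsmul_range_scale hσ'
    rw [mul_comm (k + 1) 2]
    exact hσ0.add_left_cancel (hσQ ▸ hσ0')
  exact hQ.not_two_dvd_nat (Nat.dvd_of_mul_dvd_mul_left k.succ_pos (Nat.modEq_zero_iff_dvd.1 hmod))

theorem one_add_mul_mem_survivors (hQ : 0 < Q) (hB : IsReservoir k Q B) {r : ℕ} (hr : r < 2 * Q) :
    1 + (k + 1) * r ∈ survivors B (key k Q) (removed k Q) := by
  have hle : 1 + (k + 1) * r ≤ 2 * ((k + 1) * Q) := by nlinarith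
  exact ⟨hB.mem_of_le _ hle (by simp [Nat.ModEq]),
    fun i _ hi => (two_mul_mul_lt_of_mem_removed hQ hi).not_ge hle⟩

theorem add_mem_nsmul_basis (hQ : Odd Q) (hB : IsReservoir k Q B) {y j : ℕ} (hy : 4 * Q ≤ y)
    (hj : 0 < j) (hjk : j ≤ k) : 1 + (k + 1) * y + j ∈ (k + 1) • basis k Q B := by
  obtain ⟨x, hxS, r, hr, hx⟩ := exists_survivor_add_mul_eq hQ hB hy
  have hsub : survivors B (key k Q) (removed k Q) ⊆ basis k Q B := Set.subset_union_left
  have hzero : 0 ∈ basis k Q B := .inr ⟨0, rfl⟩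
  have hone : 1 ∈ basis k Q B := hsub (one_add_mul_mem_survivors (r := 0) hQ.pos hB (by lia))
  have hfill : j - 1 ∈ (k - 1) • basis k Q B :=
    Set.nsmul_subset_nsmul_right hzero (show j - 1 ≤ k - 1 by lia)
      (by simpa using Set.nsmul_mem_nsmul hone (n := j - 1))
  have hmem := Set.add_mem_add (Set.add_mem_add hfill
    (hsub (one_add_mul_mem_survivors hQ.pos hB hr))) (hsub hxS)
  rwa [← succ_nsmul, ← succ_nsmul, Nat.sub_add_cancel (hj.trans_le hjk),
    show j - 1 + (1 + (k + 1) * r) + x = 1 + (k + 1) * y + j by lia] at hmem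

theorem eventually_mem_nsmul_basis (hk : 0 < k) (hQ : Odd Q) (hc : (2 * k).Coprime Q)
    (hB : IsReservoir k Q B) : ∀ᶠ n in atTop, n ∈ (k + 1) • basis k Q B := by
  filter_upwards [eventually_gt_atTop ((k + 1) * (2 * (k * scale k Q (2 * Q)) + 4 * Q))] with n hn
  obtain ⟨n, rfl⟩ := Nat.exists_eq_add_one_of_ne_zero (Nat.ne_zero_of_lt hn)
  have hy : 2 * (k * scale k Q (2 * Q)) + 4 * Q ≤ n / (k + 1) :=
    (Nat.le_div_iff_mul_le k.succ_pos).2 (by lia)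
  have hj : n % (k + 1) ≤ k := Nat.le_of_lt_succ (Nat.mod_lt _ k.succ_pos)
  have hn' : 1 + (k + 1) * (n / (k + 1)) + n % (k + 1) = n + 1 := by
    rw [add_assoc, Nat.div_add_mod, add_comm]
  rw [← hn']
  rcases Nat.eq_zero_or_pos (n % (k + 1)) with hzero | hpos
  · rw [hzero, add_zero, succ_nsmul']
    exact Set.add_subset_add Set.subset_union_left
      (Set.nsmul_subset_nsmul_left Set.subset_union_right)
      (one_add_mul_mem_survivors_add_nsmul hk hQ.pos hc hB (by lia))
  · exact add_mem_nsmul_basis hQ hB (by lia) hpos hj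

end Representation

section Minimality

theorem key_mem_and_tail_mem_nsmul (hk : 0 < k) (hB : IsReservoir k Q B) {A : Set ℕ}
    (hA : A ⊆ basis k Q B) (hi : IsActive B (key k Q) (removed k Q) i)
    (hn : key k Q i + tail k Q i ∈ (k + 1) • A) :
    key k Q i ∈ A ∧ tail k Q i ∈ k • (A ∩ Set.range (scale k Q)) := by
  have hAB : A = A ∩ survivors B (key k Q) (removed k Q) ∪ A ∩ Set.range (scale k Q) := by
    rw [← Set.inter_union_distrib_left, ← basis, Set.inter_eq_left.2 hA]
  rw [hAB] at hn
  obtain ⟨p, q, hpq, x, hx, σ, hσ, hsum⟩ := exists_mem_nsmul_add_nsmul_of_mem_nsmul_union hn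
  have hσE := Set.nsmul_subset_nsmul_left Set.inter_subset_right hσ
  have hmod {n τ : ℕ} (hτ : τ ∈ n • Set.range (scale k Q)) : τ ≡ 0 [MOD k + 1] :=
    (modEq_zero_of_mem_nsmul_range_scale hτ).of_mul_left 2
  have hp : p ≡ 1 [MOD k + 1] := by
    have hx1 := modEq_mul_of_mem_nsmul (fun a ha => hB.modEq_one a ha.2.1) hx
    have hn1 := (hB.modEq_one _ hi.key_mem).add (hmod (tail_mem_nsmul (Q := Q) hk i))
    rw [← hsum] at hn1
    simpa using (hx1.add (hmod hσE)).symm.trans hn1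
  obtain rfl : p = 1 := by
    rcases (show p ≤ k + 1 by lia).eq_or_lt with rfl | hlt
    · simp [Nat.ModEq, Nat.mod_eq_of_lt, hk] at hp
    · exact hp.eq_of_lt_of_lt hlt (by lia)
  obtain rfl : q = k := by lia
  rw [one_nsmul] at hx
  obtain rfl : σ = tail q Q i := by_contra fun hne => hx.2.2 i hi ⟨σ, hσE, hne, hsum⟩
  exact ⟨Nat.add_right_cancel hsum ▸ hx.1, hσ⟩

theorem basis_subset_of_eventually_mem_nsmul (hk : 0 < k) (hQ : 0 < Q) (hB : IsReservoir k Q B)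
    {A : Set ℕ} (hA : A ⊆ basis k Q B) (hbasis : ∀ᶠ n in atTop, n ∈ (k + 1) • A) :
    basis k Q B ⊆ A := by
  intro a ha
  obtain ⟨N, hN⟩ := eventually_atTop.1 hbasis
  have hunpair : (Nat.pair a N).unpair.1 = a := by rw [Nat.unpair_pair]
  have hn := hN _ ((Nat.right_le_pair a N).trans (le_key_add_tail hk hQ _))
  by_cases haE : a ∈ Set.range (scale k Q)
  · have haE' := hunpair.symm ▸ haE
    have hkey : key k Q (Nat.pair a N) ∈ B :=
      key_of_mem haE' ▸ hB.mem_of_modEq _ (by simp [Nat.ModEq, ← mul_assoc])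
    have htail := (key_mem_and_tail_mem_nsmul hk hB hA
      (isActive_of_mem_range_scale hQ hkey haE') hn).2
    rw [tail_of_mem haE', hunpair] at htail
    obtain ⟨b, rfl⟩ := haE
    exact ((isLacunary_scale hQ).mem_of_mem_nsmul (by lia) hk Set.inter_subset_right htail).1
  · have hkey : key k Q (Nat.pair a N) = a := by
      rw [key_of_notMem (hunpair.symm ▸ haE), hunpair]
    have hactive := (key_mem_survivors_iff_isActive hQ).1 (hkey.symm ▸ ha.resolve_right haE)
    exact hkey ▸ (key_mem_and_tail_mem_nsmul hk hB hA hactive hn).1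

theorem isMinimalAsymptoticBasisOfOrder_basis (hk : 0 < k) (hQ : Odd Q)
    (hc : (2 * k).Coprime Q) (hB : IsReservoir k Q B) :
    IsMinimalAsymptoticBasisOfOrder (basis k Q B) (k + 1) :=
  ⟨isAsymptoticBasisOfOrder_iff.2 (eventually_mem_nsmul_basis hk hQ hc hB), fun _ hA hbasis =>
    hA.2 (basis_subset_of_eventually_mem_nsmul hk hQ.pos hB hA.1
      (isAsymptoticBasisOfOrder_iff.1 hbasis))⟩

end Minimality

section BasisDensity

theorem hasDensity_range_scale (hQ : 0 < Q) : HasDensity (Set.range (scale k Q)) 0 := by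
  refine hasDensity_zero_of_card_le (F := fun i => {scale k Q (i + 1)}) (c := 1) (d := 0)
    (by simp) ?_
  rintro _ ⟨i, rfl⟩ hi
  obtain ⟨i, rfl⟩ := Nat.exists_eq_add_one_of_ne_zero (show i ≠ 0 by rintro rfl; exact hi.ne rfl)
  exact ⟨i, (Nat.pow_le_pow_right two_pos i.le_succ).trans (two_pow_le_scale hQ i), by simp⟩

theorem hasDensity_iUnion_removed (hQ : 0 < Q) : HasDensity (⋃ i, removed k Q i) 0 := by
  classical
  refine hasDensity_zero_of_card_le (c := 2 ^ k) (d := k) (F := fun i =>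
    (k • (Finset.range (i + 2)).image (scale k Q)).image fun σ => key k Q i + tail k Q i - σ)
    (fun i => ?_) fun x hx _ => ?_
  · calc _ ≤ (k • (Finset.range (i + 2)).image (scale k Q)).card := Finset.card_image_le
      _ ≤ (i + 2) ^ k := Finset.card_nsmul_le.trans
        (by gcongr; exact Finset.card_image_le.trans_eq (Finset.card_range _))
      _ ≤ 2 ^ k * (i + 1) ^ k := by rw [← mul_pow]; gcongr; lia
  · obtain ⟨i, hxi⟩ := Set.mem_iUnion.1 hx
    have hpow := (two_pow_le_scale hQ i).trans (scale_le_two_mul_of_mem_removed hQ hxi)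
    obtain ⟨σ, hσ, -, hsum⟩ := hxi
    refine ⟨i, by rw [pow_succ'] at hpow; lia, Finset.mem_image.2 ⟨σ, ?_, by lia⟩⟩
    rw [← Finset.mem_coe, Finset.coe_nsmul]
    refine Set.nsmul_subset_nsmul_left ?_ (mem_nsmul_scale_inter_Iic hQ hσ
      (Nat.le_of_add_left_le hsum.le))
    rintro _ ⟨⟨j, rfl⟩, hj⟩
    have := (strictMono_scale hQ).le_iff_le.1 hj
    exact Finset.mem_coe.2 (Finset.mem_image_of_mem _ (Finset.mem_range.2 (by lia)))

theorem hasDensity_basis (hQ : 0 < Q) {α : ℝ} (hB : HasDensity B α) :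
    HasDensity (basis k Q B) α := by
  have hzero : HasDensity (Set.range (scale k Q) ∪ ⋃ i, removed k Q i) 0 :=
    (hasDensity_range_scale hQ).union_zero (hasDensity_iUnion_removed hQ)
  refine hB.of_subset_union hzero ?_ fun x hx => ?_
  · exact Set.union_subset_union (Set.sep_subset _ _) Set.subset_union_left
  · by_cases hxS : x ∈ survivors B (key k Q) (removed k Q)
    · exact .inl (.inl hxS)
    · obtain ⟨i, -, hxi⟩ := exists_isActive_of_notMem_survivors hx hxS
      exact .inr (.inr (Set.mem_iUnion.2 ⟨i, hxi⟩))

end BasisDensity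

end ErdosNathanson

theorem erdos_nathanson_minimal_basis_density_alpha_general (h : ℕ) (hh : 2 ≤ h)
    (α : ℝ) (hα0 : 0 < α) (hα1 : α ≤ 1 / (h : ℝ)) :
    ∃ A : Set ℕ, IsMinimalAsymptoticBasisOfOrder A h ∧
      Tendsto (fun n : ℕ => (countingFn A n : ℝ) / (n : ℝ)) atTop (nhds α) := by
  obtain ⟨k, rfl⟩ := Nat.exists_eq_add_of_le' (show 1 ≤ h by lia)
  have hk : 0 < k := by lia
  obtain ⟨Q, hQle, hQ⟩ := Nat.exists_infinite_primes (max (2 * k + 1) ⌈1 / α⌉₊)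
  obtain ⟨hkQ, hαQ⟩ := max_le_iff.1 hQle
  have hαQ' : 1 / (((k + 1) * Q : ℕ) : ℝ) ≤ α := by
    refine (one_div_le (by have := hQ.pos; positivity) hα0).2 ((Nat.ceil_le.1 hαQ).trans ?_)
    exact_mod_cast Nat.le_mul_of_pos_left Q k.succ_pos
  obtain ⟨B, hB, hBα⟩ := ErdosNathanson.exists_isReservoir hQ.pos hαQ' hα1
  exact ⟨_, ErdosNathanson.isMinimalAsymptoticBasisOfOrder_basis hk
    (hQ.odd_of_ne_two (by lia)) (Nat.coprime_of_lt_prime (by lia) hkQ hQ).symm hB,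
    ErdosNathanson.hasDensity_basis hQ.pos hBα⟩

theorem erdos_nathanson_minimal_basis_density_alpha (h : ℕ) (hh : 2 ≤ h)
    (α : ℝ) (hα0 : 0 < α) (hα1 : α < 1 / (2 * (h : ℝ) - 2)) :
    ∃ A : Set ℕ, IsMinimalAsymptoticBasisOfOrder A h ∧
      Tendsto (fun n : ℕ => (countingFn A n : ℝ) / (n : ℝ)) atTop (nhds α) := by
  have hh' : (2 : ℝ) ≤ h := by exact_mod_cast hh
  exact erdos_nathanson_minimal_basis_density_alpha_general h hh α hα0
    (hα1.le.trans (one_div_le_one_div_of_le (by linarith) (by linarith)))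
end

section
/- (Erdős–Nathanson) For every real number α with 0 < α ≤ 1/2, there exists a minimal asymptotic basis A of order 2 whose asymptotic density exists and equals α, i.e., lim_{n→∞} A(n)/n = α. -/
open Pointwise Filter

/-!
The basis `A` is built in stages separated by critical integers `N' = 2 * M ^ 2 + 1`, where `M` is
the previous critical integer. Up to `M ^ 2` the stage copies a set `L` of density `α`, and above
`M ^ 2` it copies `N' - U`, where `U` also has density `α`. Since `L` and `U` are disjoint, nothing
here represents `N'`, so adding the single element `N' - a`, for some earlier `a ∈ A`, makes `a`
indispensable for `N'`; letting `a` run through `A` with infinitely many repetitions makes `A`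
minimal. The other integers within `M` of `N'` have the form `N' + b - e` with `b ∈ L` and `e ∈ U`
as soon as `L - U` contains every nonzero integer of absolute value at most `M`, while those far
from the critical integers are the sum of an element of `A` and of a bounded integer.

Sturmian sets of slope `α ≤ 1 / 2` provide disjoint `F` and `G` of density `α` with bounded gaps.
To get all the differences, they are modified on a window of bounded length: there `U` is a hole
`[q, q + g)` and `L` is the rest of the window, so that every translate of the hole but the hole
itself meets `L`.
-/

namespace MinimalBasis

section Bases

variable {A : Set ℕ}

lemma isAsymptoticBasisOfOrder_two_iff :
    IsAsymptoticBasisOfOrder A 2 ↔ ∀ᶠ n in atTop, n ∈ A + A := by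
  refine eventually_congr (.of_forall fun n => ⟨?_, ?_⟩)
  · rintro ⟨x, hx, hxn⟩
    exact ⟨x 0, hx 0, x 1, hx 1, by simpa [Fin.sum_univ_two] using hxn⟩
  · rintro ⟨x, hx, y, hy, hxy⟩
    exact ⟨![x, y], by simp [Fin.forall_fin_two, hx, hy], by simpa using hxy⟩

lemma isMinimalAsymptoticBasisOfOrder_two_of_frequently (hA : IsAsymptoticBasisOfOrder A 2)
    (h : ∀ a ∈ A, ∃ᶠ n in atTop, ∀ x ∈ A, ∀ y ∈ A, x + y = n → x = a ∨ y = a) :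
    IsMinimalAsymptoticBasisOfOrder A 2 := by
  refine ⟨hA, fun B hBA hB => ?_⟩
  obtain ⟨a, haA, haB⟩ := Set.exists_of_ssubset hBA
  obtain ⟨n, hn, x, hx, y, hy, hxy⟩ :=
    ((h a haA).and_eventually (isAsymptoticBasisOfOrder_two_iff.1 hB)).exists
  rcases hn x (hBA.1 hx) y (hBA.1 hy) hxy with rfl | rfl
  · exact haB hx
  · exact haB hy

end Bases

section Discrepancy

/-- The discrepancy of `X` on `(a, b]`: the difference between the number of elements of `X` there
and the number `α * (b - a)` expected of a set of density `α`. -/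
noncomputable def discrepancy (α : ℝ) (X : Set ℕ) (a b : ℕ) : ℝ :=
  (X ∩ Set.Ioc a b).ncard - α * ((b : ℝ) - a)

/-- `X` is balanced with density `α` and error `c` if its discrepancy on every interval is at most
`c` in absolute value. -/
def IsBalanced (α c : ℝ) (X : Set ℕ) : Prop :=
  ∀ a b : ℕ, a ≤ b → |discrepancy α X a b| ≤ c

/-- The reflection `N - X` of a set of natural numbers, without truncation: elements of `X` above
`N` are discarded. -/
def reflect (N : ℕ) (X : Set ℕ) : Set ℕ := {y | ∃ e ∈ X, y + e = N}

variable {α c : ℝ} {X Y : Set ℕ} {a b d : ℕ}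

lemma discrepancy_congr (h : ∀ y, a < y → y ≤ b → (y ∈ X ↔ y ∈ Y)) :
    discrepancy α X a b = discrepancy α Y a b := by
  have : X ∩ Set.Ioc a b = Y ∩ Set.Ioc a b :=
    Set.ext fun y => and_congr_left fun hy => h y hy.1 hy.2
  rw [discrepancy, discrepancy, this]

lemma discrepancy_add (hab : a ≤ b) (hbd : b ≤ d) :
    discrepancy α X a b + discrepancy α X b d = discrepancy α X a d := by
  have hdisj : Disjoint (X ∩ Set.Ioc a b) (X ∩ Set.Ioc b d) :=
    (Set.Ioc_disjoint_Ioc_of_le le_rfl).mono Set.inter_subset_right Set.inter_subset_right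
  have hcard := Set.ncard_union_eq hdisj
  rw [← Set.inter_union_distrib_left, Set.Ioc_union_Ioc_eq_Ioc hab hbd] at hcard
  rw [discrepancy, discrepancy, discrepancy, hcard]
  push_cast
  ring

lemma ncard_inter_Ioc_le : (X ∩ Set.Ioc a b).ncard ≤ b - a := by
  simpa [Set.ncard_eq_toFinset_card'] using
    Set.ncard_le_ncard (Set.inter_subset_right : X ∩ Set.Ioc a b ⊆ _)

lemma abs_discrepancy_le (hα₀ : 0 ≤ α) (hα₁ : α ≤ 1) (hab : a ≤ b) :
    |discrepancy α X a b| ≤ (b : ℝ) - a := by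
  have hcard : ((X ∩ Set.Ioc a b).ncard : ℝ) ≤ (b : ℝ) - a := by
    rw [← Nat.cast_sub hab]
    exact_mod_cast ncard_inter_Ioc_le
  have hlen : (0 : ℝ) ≤ (b : ℝ) - a := sub_nonneg.2 (by exact_mod_cast hab)
  rw [discrepancy, abs_le]
  constructor <;> nlinarith [mul_le_mul_of_nonneg_right hα₁ hlen, mul_nonneg hα₀ hlen]

lemma discrepancy_reflect {N : ℕ} (hab : a ≤ b) (hbN : b < N) :
    discrepancy α (reflect N X) a b = discrepancy α X (N - 1 - b) (N - 1 - a) := by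
  have himage : (N - ·) '' (X ∩ Set.Ioc (N - 1 - b) (N - 1 - a)) = reflect N X ∩ Set.Ioc a b := by
    ext y
    constructor
    · rintro ⟨e, ⟨heX, he⟩, rfl⟩
      simp only [Set.mem_Ioc] at he
      exact ⟨⟨e, heX, by dsimp only; omega⟩, by simp only [Set.mem_Ioc]; omega⟩
    · rintro ⟨⟨e, heX, rfl⟩, hy⟩
      simp only [Set.mem_Ioc] at hy
      exact ⟨e, ⟨heX, by simp only [Set.mem_Ioc]; omega⟩, by simp⟩
  have hinj : Set.InjOn (N - ·) (X ∩ Set.Ioc (N - 1 - b) (N - 1 - a)) := by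
    rintro x ⟨-, hx⟩ y ⟨-, hy⟩ hxy
    simp only [Set.mem_Ioc] at hx hy hxy
    omega
  rw [discrepancy, discrepancy, ← himage, hinj.ncard_image, Nat.sub_sub, Nat.sub_sub,
    Nat.cast_sub (by omega), Nat.cast_sub (by omega)]
  push_cast
  ring

lemma IsBalanced.nonneg (hX : IsBalanced α c X) : 0 ≤ c :=
  (abs_nonneg _).trans (hX 0 0 le_rfl)

lemma IsBalanced.density_nonneg (hX : IsBalanced α c X) : 0 ≤ α := by
  by_contra! hα
  obtain ⟨n, hn⟩ := exists_lt_nsmul (neg_pos.2 hα) c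
  have hdisc := (abs_le.1 (hX 0 n n.zero_le)).2
  simp only [discrepancy, nsmul_eq_mul, Nat.cast_zero, sub_zero] at hn hdisc
  linarith [(X ∩ Set.Ioc 0 n).ncard.cast_nonneg (α := ℝ)]

lemma IsBalanced.density_le_one (hX : IsBalanced α c X) : α ≤ 1 := by
  by_contra! hα
  obtain ⟨n, hn⟩ := exists_lt_nsmul (sub_pos.2 hα) c
  have hdisc := (abs_le.1 (hX 0 n n.zero_le)).1
  have hcard : ((X ∩ Set.Ioc 0 n).ncard : ℝ) ≤ n := by exact_mod_cast ncard_inter_Ioc_le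
  simp only [discrepancy, nsmul_eq_mul, Nat.cast_zero, sub_zero] at hn hdisc
  linarith

lemma IsBalanced.mono {c' : ℝ} (hX : IsBalanced α c X) (hc : c ≤ c') : IsBalanced α c' X :=
  fun a b hab => (hX a b hab).trans hc

lemma IsBalanced.ite (hX : IsBalanced α c X) (W : Finset ℕ) (T : Set ℕ) :
    IsBalanced α (c + W.card) ((W : Set ℕ).ite T X) := by
  have hcard : ∀ {Y Z : Set ℕ}, Y ⊆ Z ∪ W → ∀ a b : ℕ,
      ((Y ∩ Set.Ioc a b).ncard : ℝ) ≤ (Z ∩ Set.Ioc a b).ncard + W.card := by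
    intro Y Z hYZ a b
    have hsub : Y ∩ Set.Ioc a b ⊆ (Z ∩ Set.Ioc a b) ∪ W := fun y hy =>
      (hYZ hy.1).imp_left fun hyZ => ⟨hyZ, hy.2⟩
    have := (Set.ncard_le_ncard hsub).trans (Set.ncard_union_le _ _)
    rw [Set.ncard_coe_finset] at this
    exact_mod_cast this
  have hsub : (W : Set ℕ).ite T X ⊆ X ∪ W := by
    rintro y (hy | hy)
    exacts [Or.inr hy.2, Or.inl hy.1]
  have hsup : X ⊆ (W : Set ℕ).ite T X ∪ W := fun y hy =>
    (em (y ∈ (W : Set ℕ))).symm.imp_left fun hyW => Or.inr ⟨hy, hyW⟩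
  intro a b hab
  have hX := abs_le.1 (hX a b hab)
  rw [discrepancy] at hX ⊢
  rw [abs_le]
  constructor <;> linarith [hcard hsub a b, hcard hsup a b]

lemma tendsto_countingFn_div_of_discrepancy_isBigO_sqrt
    (h : (fun n : ℕ => discrepancy α X 0 n) =O[atTop] fun n : ℕ => √(n : ℝ)) :
    Tendsto (fun n : ℕ => (countingFn X n : ℝ) / n) atTop (nhds α) := by
  have hsqrt : (fun n : ℕ => √(n : ℝ)) =o[atTop] fun n : ℕ => (n : ℝ) := by
    refine Asymptotics.IsLittleO.of_pow (n := 2) ?_ two_ne_zero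
    simp only [Pi.pow_def, Real.sq_sqrt (Nat.cast_nonneg _)]
    exact (Asymptotics.isLittleO_pow_pow_atTop_of_lt one_lt_two).comp_tendsto
      tendsto_natCast_atTop_atTop |>.congr_left (by simp)
  have hzero := (h.trans_isLittleO hsqrt).tendsto_div_nhds_zero
  refine (add_zero α ▸ hzero.const_add α).congr' ?_
  filter_upwards [eventually_ne_atTop 0] with n hn
  have hn' : (n : ℝ) ≠ 0 := by exact_mod_cast hn
  rw [countingFn, ← zero_add 1, Set.Icc_add_one_left_eq_Ioc, discrepancy]
  field_simp
  simp

end Discrepancy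

section Patterns

/-- `X` is syndetic with gap `l` if it meets every interval of `l` consecutive natural numbers. -/
def IsSyndetic (X : Set ℕ) (l : ℕ) : Prop := ∀ s, (X ∩ Set.Ico s (s + l)).Nonempty

/-- The window `[q - g, q + 2 * g)` around the hole `[q, q + g)` on which the patterns are
modified. -/
def window (g q : ℕ) : Finset ℕ := Finset.Ico (q - g) (q + 2 * g)

/-- The pattern equal to `F` outside the window, and to the complement of the hole inside. -/
def lowerPattern (F : Set ℕ) (g q : ℕ) : Set ℕ :=
  (window g q : Set ℕ).ite (Set.Ico q (q + g))ᶜ F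

/-- The pattern equal to `G` outside the window, and to the hole inside. -/
def upperPattern (G : Set ℕ) (g q : ℕ) : Set ℕ :=
  (window g q : Set ℕ).ite (Set.Ico q (q + g)) G

variable {F G X : Set ℕ} {g l q s y : ℕ} {α c : ℝ}

lemma IsSyndetic.pos (hX : IsSyndetic X l) : 0 < l := by
  obtain ⟨x, -, hx⟩ := hX 0
  rw [Set.mem_Ico] at hx
  omega

lemma mem_lowerPattern : y ∈ lowerPattern F g q ↔
    q ≤ y + g ∧ y < q + 2 * g ∧ (y < q ∨ q + g ≤ y) ∨
      y ∈ F ∧ (y + g < q ∨ q + 2 * g ≤ y) := by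
  simp only [lowerPattern, window, Set.ite, Finset.coe_Ico, Set.mem_union, Set.mem_inter_iff,
    Set.mem_sdiff, Set.mem_compl_iff, Set.mem_Ico]
  refine or_congr ?_ (and_congr_right fun _ => ?_) <;> omega

lemma mem_upperPattern : y ∈ upperPattern G g q ↔
    q ≤ y ∧ y < q + g ∨ y ∈ G ∧ (y + g < q ∨ q + 2 * g ≤ y) := by
  simp only [upperPattern, window, Set.ite, Finset.coe_Ico, Set.mem_union, Set.mem_inter_iff,
    Set.mem_sdiff, Set.mem_Ico]
  refine or_congr ?_ (and_congr_right fun _ => ?_) <;> omega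

lemma disjoint_lowerPattern_upperPattern (h : Disjoint F G) :
    Disjoint (lowerPattern F g q) (upperPattern G g q) := by
  rw [Set.disjoint_left] at h ⊢
  intro y hF hG
  rw [mem_lowerPattern] at hF
  rw [mem_upperPattern] at hG
  have := @h y
  grind

lemma card_window_le : (window g q).card ≤ 3 * g := by
  rw [window, Nat.card_Ico]
  omega

lemma IsBalanced.lowerPattern (hF : IsBalanced α c F) :
    IsBalanced α (c + (3 * g : ℕ)) (lowerPattern F g q) :=
  (hF.ite _ _).mono (by gcongr; exact card_window_le)

lemma IsBalanced.upperPattern (hG : IsBalanced α c G) :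
    IsBalanced α (c + (3 * g : ℕ)) (upperPattern G g q) :=
  (hG.ite _ _).mono (by gcongr; exact card_window_le)

lemma IsSyndetic.lowerPattern_inter_Ico_nonempty (hF : IsSyndetic F g) (hs : s ≠ q) :
    (lowerPattern F g q ∩ Set.Ico s (s + g)).Nonempty := by
  obtain ⟨f, hfF, hf⟩ := hF s
  simp only [Set.Nonempty, Set.mem_inter_iff, mem_lowerPattern, Set.mem_Ico] at hf ⊢
  rcases le_or_gt (s + 2 * g) q with hbefore | hbefore
  · exact ⟨f, Or.inr ⟨hfF, by omega⟩, hf⟩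
  rcases le_or_gt (q + 2 * g) s with hafter | hafter
  · exact ⟨f, Or.inr ⟨hfF, by omega⟩, hf⟩
  rcases hs.lt_or_gt with hsq | hqs
  · exact ⟨max s (q - g), by omega, by omega⟩
  · exact ⟨min (s + g) (q + 2 * g) - 1, by omega, by omega⟩

lemma IsSyndetic.lowerPattern (hF : IsSyndetic F g) :
    IsSyndetic (lowerPattern F g q) (2 * g) := by
  intro s
  have hg := hF.pos
  obtain ⟨t, htq, hst, hts⟩ : ∃ t ≠ q, s ≤ t ∧ t ≤ s + g := by
    rcases eq_or_ne s q with rfl | hs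
    · exact ⟨s + g, by omega, by omega, le_rfl⟩
    · exact ⟨s, hs, le_rfl, by omega⟩
  exact (hF.lowerPattern_inter_Ico_nonempty htq).mono
    (Set.inter_subset_inter_right _ (Set.Ico_subset_Ico hst (by omega)))

lemma IsSyndetic.upperPattern (hG : IsSyndetic G g) :
    IsSyndetic (upperPattern G g q) (2 * g) := by
  intro s
  obtain ⟨x, hxG, hx⟩ := hG s
  obtain ⟨y, hyG, hy⟩ := hG (s + g)
  simp only [Set.Nonempty, Set.mem_inter_iff, mem_upperPattern, Set.mem_Ico] at hx hy ⊢
  rcases le_or_gt (s + 2 * g) q with hbefore | hbefore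
  · exact ⟨x, Or.inr ⟨hxG, by omega⟩, by omega⟩
  rcases le_or_gt (q + g) s with hafter | hafter
  · exact ⟨y, Or.inr ⟨hyG, by omega⟩, by omega⟩
  · exact ⟨max s q, by omega, by omega⟩

end Patterns

/-- The data of the construction: every natural number up to `seed` is put in the basis, and the
stage that starts at the critical integer `M` copies `lower M` up to `M ^ 2` and the reflection of
`upper M` above. -/
structure Blueprint where
  seed : ℕ
  lower : ℕ → Set ℕ
  upper : ℕ → Set ℕ

namespace Blueprint

/-- The critical integers, at which the minimality of the basis is tested. -/
def threshold (S : Blueprint) : ℕ → ℕ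
  | 0 => S.seed
  | k + 1 => 2 * S.threshold k ^ 2 + 1

/-- The part of the basis in `(M, 2 * M ^ 2 + 1]`, in which `2 * M ^ 2 + 1 - a` is the only element
that serves to represent `2 * M ^ 2 + 1`. -/
def stage (S : Blueprint) (M a : ℕ) : Set ℕ :=
  S.lower M ∩ Set.Ioc M (M ^ 2) ∪
    reflect (2 * M ^ 2 + 1) (S.upper M ∩ Set.Ioc M (M ^ 2) ∪ {a})

open Classical in
/-- The element of `X` made indispensable at stage `k`. The first component of `Nat.unpair` takes
each value infinitely often; `0` is the default when it is not in `X`. -/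
noncomputable def pivot (X : Set ℕ) (k : ℕ) : ℕ :=
  if (Nat.unpair k).1 ∈ X then (Nat.unpair k).1 else 0

/-- The part of the basis up to `S.threshold k`. -/
noncomputable def part (S : Blueprint) : ℕ → Set ℕ
  | 0 => Set.Iic S.seed
  | k + 1 => S.part k ∪ S.stage (S.threshold k) (pivot (S.part k) k)

/-- The set constructed from `S`, a minimal asymptotic basis when `S` is admissible. -/
def basis (S : Blueprint) : Set ℕ := ⋃ k, S.part k

/-- The properties of the patterns `lower M` and `upper M` that make `S.basis` a minimal asymptotic
basis of order 2; `l` is a bound for their gaps. -/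
structure IsAdmissible (S : Blueprint) (l : ℕ) : Prop where
  two_mul_le_seed : 2 * l ≤ S.seed
  disjoint : ∀ M ≥ S.seed, Disjoint (S.lower M) (S.upper M)
  syndetic_lower : ∀ M ≥ S.seed, IsSyndetic (S.lower M) l
  syndetic_upper : ∀ M ≥ S.seed, IsSyndetic (S.upper M) l
  exists_sub_eq : ∀ M ≥ S.seed, ∀ d : ℤ, d ≠ 0 → |d| ≤ M →
    ∃ b ∈ S.lower M ∩ Set.Ioc M (M ^ 2), ∃ e ∈ S.upper M ∩ Set.Ioc M (M ^ 2), (b - e : ℤ) = d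

variable {S : Blueprint} {k l n m x y e M a : ℕ} {α c : ℝ}

section Threshold

lemma threshold_succ (S : Blueprint) (k : ℕ) :
    S.threshold (k + 1) = 2 * S.threshold k ^ 2 + 1 := rfl

lemma threshold_le_sq (S : Blueprint) (k : ℕ) : S.threshold k ≤ S.threshold k ^ 2 :=
  Nat.le_self_pow two_ne_zero _

lemma strictMono_threshold (S : Blueprint) : StrictMono S.threshold :=
  strictMono_nat_of_lt_succ fun k => by
    have := S.threshold_succ k
    have := S.threshold_le_sq k
    omega

lemma seed_le_threshold (S : Blueprint) (k : ℕ) : S.seed ≤ S.threshold k :=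
  S.strictMono_threshold.monotone (Nat.zero_le k)

lemma tendsto_threshold_succ (S : Blueprint) :
    Tendsto (fun k => S.threshold (k + 1)) atTop atTop :=
  S.strictMono_threshold.tendsto_atTop.comp (tendsto_add_atTop_nat 1)

lemma exists_threshold_lt_le (hn : S.threshold 1 < n) :
    ∃ k, S.threshold (k + 1) < n ∧ n ≤ S.threshold (k + 2) := by
  have hcover := iUnion_Ioc_map_succ_eq_Ioi (f := fun k => S.threshold (k + 1))
    (fun k => S.strictMono_threshold.monotone (Nat.succ_le_succ k.zero_le))
    (not_bddAbove_of_tendsto_atTop S.tendsto_threshold_succ)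
  exact Set.mem_iUnion.1 (hcover.ge hn)

end Threshold

section Membership

lemma le_of_mem_stage (ha : a ≤ M) (hy : y ∈ S.stage M a) : M < y ∧ y ≤ 2 * M ^ 2 + 1 := by
  have hM : M ≤ M ^ 2 := Nat.le_self_pow two_ne_zero M
  rcases hy with ⟨-, hy⟩ | ⟨e, ⟨-, he⟩ | rfl, hye⟩ <;> grind

lemma zero_mem_part (S : Blueprint) (k : ℕ) : 0 ∈ S.part k := by
  induction k with
  | zero => exact Nat.zero_le _
  | succ k ih => exact Or.inl ih

lemma pivot_mem_part (S : Blueprint) (k : ℕ) : pivot (S.part k) k ∈ S.part k := by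
  rw [pivot]
  split_ifs with h
  exacts [h, S.zero_mem_part k]

lemma part_subset_Iic (S : Blueprint) (k : ℕ) : S.part k ⊆ Set.Iic (S.threshold k) := by
  induction k with
  | zero => exact subset_rfl
  | succ k ih =>
    rintro y (hy | hy)
    · exact (ih hy).trans (S.strictMono_threshold.monotone k.le_succ)
    · exact (le_of_mem_stage (ih (S.pivot_mem_part k)) hy).2

lemma pivot_le_threshold (S : Blueprint) (k : ℕ) : pivot (S.part k) k ≤ S.threshold k :=
  S.part_subset_Iic k (S.pivot_mem_part k)

lemma monotone_part (S : Blueprint) : Monotone S.part :=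
  monotone_nat_of_le_succ fun _ => Set.subset_union_left

lemma part_subset_basis (S : Blueprint) (k : ℕ) : S.part k ⊆ S.basis :=
  Set.subset_iUnion _ k

lemma basis_inter_Iic (S : Blueprint) (k : ℕ) :
    S.basis ∩ Set.Iic (S.threshold k) = S.part k := by
  refine subset_antisymm ?_ (Set.subset_inter (S.part_subset_basis k) (S.part_subset_Iic k))
  rintro y ⟨hy, hyk : y ≤ S.threshold k⟩
  obtain ⟨j, hj⟩ := Set.mem_iUnion.1 hy
  induction j with
  | zero => exact S.monotone_part k.zero_le hj
  | succ j ih =>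
    rcases le_or_gt (j + 1) k with hjk | hkj
    · exact S.monotone_part hjk hj
    · have hkj' := S.strictMono_threshold.monotone (Nat.lt_succ_iff.1 hkj)
      refine hj.elim ih fun hy => absurd (le_of_mem_stage (S.pivot_le_threshold j) hy).1 ?_
      omega

lemma mem_basis_iff_mem_stage (hy : S.threshold k < y) (hy' : y ≤ S.threshold (k + 1)) :
    y ∈ S.basis ↔ y ∈ S.stage (S.threshold k) (pivot (S.part k) k) := by
  have hpart : y ∉ S.part k := fun h => (S.part_subset_Iic k h).not_gt hy
  calc y ∈ S.basis ↔ y ∈ S.basis ∩ Set.Iic (S.threshold (k + 1)) := (and_iff_left hy').symm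
    _ ↔ y ∈ S.part (k + 1) := by rw [basis_inter_Iic]
    _ ↔ _ := or_iff_right hpart

lemma mem_basis_iff_mem_lower (hy : S.threshold k < y) (hy' : y ≤ S.threshold k ^ 2) :
    y ∈ S.basis ↔ y ∈ S.lower (S.threshold k) := by
  have hN := S.threshold_succ k
  have hpivot := S.pivot_le_threshold k
  rw [mem_basis_iff_mem_stage hy (by omega)]
  refine ⟨?_, fun h => Or.inl ⟨h, hy, hy'⟩⟩
  rintro (h | ⟨e, ⟨-, he⟩ | rfl, hye⟩) <;> grind

lemma mem_basis_iff_mem_upper (hy : S.threshold k ^ 2 < y) (hye : y + e = S.threshold (k + 1)) :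
    y ∈ S.basis ↔
      e ∈ S.upper (S.threshold k) ∧ S.threshold k < e ∨ e = pivot (S.part k) k := by
  have hN := S.threshold_succ k
  have hM := S.threshold_le_sq k
  rw [mem_basis_iff_mem_stage (k := k) (by omega) (by omega)]
  constructor
  · rintro (h | ⟨e', he', hye'⟩)
    · grind
    · obtain rfl : e = e' := by omega
      exact he'.imp_left fun ⟨heU, he⟩ => ⟨heU, he.1⟩
  · rintro (⟨heU, he⟩ | hep)
    · exact Or.inr ⟨e, Or.inl ⟨heU, he, by omega⟩, hye⟩
    · exact Or.inr ⟨e, Or.inr hep, hye⟩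

end Membership

section Minimality

lemma eq_pivot_of_add_eq_threshold
    (hdisj : Disjoint (S.lower (S.threshold k)) (S.upper (S.threshold k)))
    (hx : x ∈ S.basis) (hy : y ∈ S.basis) (hxy : x + y = S.threshold (k + 1)) :
    x = pivot (S.part k) k ∨ y = pivot (S.part k) k := by
  wlog hle : x ≤ y generalizing x y
  · exact (this hy hx (by omega) (by omega)).symm
  have hN := S.threshold_succ k
  rcases (mem_basis_iff_mem_upper (k := k) (by omega) ((add_comm y x).trans hxy)).1 hy with
    ⟨hxU, hMx⟩ | hxp
  · exact absurd hxU (hdisj.notMem_of_mem_left ((mem_basis_iff_mem_lower hMx (by omega)).1 hx))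
  · exact Or.inl hxp

lemma frequently_pivot_eq (ha : a ∈ S.basis) : ∃ᶠ k in atTop, pivot (S.part k) k = a := by
  obtain ⟨j, hj⟩ := Set.mem_iUnion.1 ha
  refine frequently_atTop.2 fun n => ⟨Nat.pair a (max n j), ?_, ?_⟩
  · exact (le_max_left n j).trans (Nat.right_le_pair a _)
  · have hmem : a ∈ S.part (Nat.pair a (max n j)) :=
      S.monotone_part ((le_max_right n j).trans (Nat.right_le_pair a _)) hj
    rw [pivot, Nat.unpair_pair]
    exact if_pos hmem

end Minimality

section Representation

lemma threshold_mem_basis_add_basis (S : Blueprint) (k : ℕ) :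
    S.threshold (k + 1) ∈ S.basis + S.basis := by
  have hN := S.threshold_succ k
  have hM := S.threshold_le_sq k
  have hpivot := S.pivot_le_threshold k
  refine ⟨_, S.part_subset_basis k (S.pivot_mem_part k),
    S.threshold (k + 1) - pivot (S.part k) k, ?_, by dsimp only; omega⟩
  exact (mem_basis_iff_mem_upper (k := k) (by omega) (by omega)).2 (Or.inr rfl)

lemma IsAdmissible.mem_basis_add_basis_of_near_threshold (hS : S.IsAdmissible l)
    (hne : m ≠ S.threshold (k + 1)) (hle : m ≤ S.threshold (k + 1) + S.threshold k)
    (hge : S.threshold (k + 1) ≤ m + S.threshold k) : m ∈ S.basis + S.basis := by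
  have hN := S.threshold_succ k
  obtain ⟨b, ⟨hbL, hMb, hb⟩, e, ⟨heU, hMe, he⟩, hbe⟩ :=
    hS.exists_sub_eq _ (S.seed_le_threshold k) ((m : ℤ) - S.threshold (k + 1)) (by omega)
      (abs_le.2 ⟨by omega, by omega⟩)
  refine ⟨b, (mem_basis_iff_mem_lower hMb hb).2 hbL, S.threshold (k + 1) - e, ?_,
    by dsimp only; omega⟩
  exact (mem_basis_iff_mem_upper (k := k) (by omega) (by omega)).2 (Or.inl ⟨heU, hMe⟩)

lemma IsAdmissible.basis_inter_Ico_nonempty (hS : S.IsAdmissible l) {s : ℕ}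
    (hs : S.threshold k < s) (hs' : s + 2 * l + S.threshold k ≤ S.threshold (k + 1)) :
    (S.basis ∩ Set.Ico s (s + 2 * l)).Nonempty := by
  have hN := S.threshold_succ k
  rcases le_or_gt (s + l) (S.threshold k ^ 2 + 1) with hlow | hhigh
  · obtain ⟨b, hbL, hb⟩ := hS.syndetic_lower _ (S.seed_le_threshold k) s
    rw [Set.mem_Ico] at hb
    refine ⟨b, (mem_basis_iff_mem_lower (k := k) (by omega) (by omega)).2 hbL, ?_⟩
    rw [Set.mem_Ico]
    omega
  · obtain ⟨e, heU, he⟩ := hS.syndetic_upper _ (S.seed_le_threshold k)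
      (S.threshold (k + 1) + 1 - (s + 2 * l))
    rw [Set.mem_Ico] at he
    refine ⟨S.threshold (k + 1) - e, ?_, ?_⟩
    · exact (mem_basis_iff_mem_upper (k := k) (by omega) (by omega)).2 (Or.inl ⟨heU, by omega⟩)
    · rw [Set.mem_Ico]
      omega

lemma IsAdmissible.mem_basis_add_basis_of_far_from_threshold (hS : S.IsAdmissible l)
    (hgt : S.threshold k + 2 * l < m) (hle : m + S.threshold k ≤ S.threshold (k + 1)) :
    m ∈ S.basis + S.basis := by
  obtain ⟨y, hyA, hy⟩ := hS.basis_inter_Ico_nonempty (k := k) (s := m - 2 * l) (by omega)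
    (by omega)
  have hseed := hS.two_mul_le_seed
  rw [Set.mem_Ico] at hy
  have hmy : m - y ∈ S.part 0 := by
    change m - y ≤ S.seed
    omega
  exact ⟨y, hyA, m - y, S.part_subset_basis 0 hmy, by dsimp only; omega⟩

lemma IsAdmissible.mem_basis_add_basis (hS : S.IsAdmissible l) (hm : S.threshold 1 < m) :
    m ∈ S.basis + S.basis := by
  obtain ⟨k, hkm, hmk⟩ := exists_threshold_lt_le hm
  have hseed := hS.two_mul_le_seed.trans (S.seed_le_threshold k)
  rcases le_or_gt m (S.threshold (k + 1) + S.threshold k) with hnear | hfar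
  · exact hS.mem_basis_add_basis_of_near_threshold hkm.ne' hnear (by omega)
  rcases le_or_gt (m + S.threshold (k + 1)) (S.threshold (k + 2)) with hfar' | hnear'
  · exact hS.mem_basis_add_basis_of_far_from_threshold (by omega) hfar'
  rcases eq_or_ne m (S.threshold (k + 2)) with rfl | hne
  · exact S.threshold_mem_basis_add_basis (k + 1)
  · exact hS.mem_basis_add_basis_of_near_threshold hne (hmk.trans (Nat.le_add_right _ _)) hnear'.le

theorem IsAdmissible.isMinimalAsymptoticBasisOfOrder (hS : S.IsAdmissible l) :
    IsMinimalAsymptoticBasisOfOrder S.basis 2 := by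
  refine isMinimalAsymptoticBasisOfOrder_two_of_frequently ?_ fun a ha => ?_
  · refine isAsymptoticBasisOfOrder_two_iff.2 ?_
    filter_upwards [eventually_gt_atTop (S.threshold 1)] with m hm
    exact hS.mem_basis_add_basis hm
  · refine S.tendsto_threshold_succ.frequently ((frequently_pivot_eq ha).mono ?_)
    rintro k rfl x hx y hy hxy
    exact eq_pivot_of_add_eq_threshold (hS.disjoint _ (S.seed_le_threshold k)) hx hy hxy

end Representation

section Density

lemma abs_discrepancy_basis_le_of_le_sq (hL : IsBalanced α c (S.lower (S.threshold k)))
    (hn : S.threshold k ≤ n) (hn' : n ≤ S.threshold k ^ 2) :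
    |discrepancy α S.basis (S.threshold k) n| ≤ c := by
  rw [discrepancy_congr fun y hy hyn => mem_basis_iff_mem_lower hy (hyn.trans hn')]
  exact hL _ _ hn

lemma abs_discrepancy_basis_le_of_sq_le (hU : IsBalanced α c (S.upper (S.threshold k)))
    (hn : S.threshold k ^ 2 ≤ n) (hn' : n + S.threshold k < S.threshold (k + 1)) :
    |discrepancy α S.basis (S.threshold k ^ 2) n| ≤ c := by
  have hcongr : ∀ y, S.threshold k ^ 2 < y → y ≤ n →
      (y ∈ S.basis ↔ y ∈ reflect (S.threshold (k + 1)) (S.upper (S.threshold k))) := by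
    intro y hy hyn
    have hpivot := S.pivot_le_threshold k
    rw [mem_basis_iff_mem_upper (e := S.threshold (k + 1) - y) hy (by omega)]
    constructor
    · exact fun h => ⟨_, (h.resolve_right (by omega)).1, by omega⟩
    · rintro ⟨e, he, hye⟩
      obtain rfl : e = S.threshold (k + 1) - y := by omega
      exact Or.inl ⟨he, by omega⟩
  rw [discrepancy_congr hcongr, discrepancy_reflect hn (by omega)]
  exact hU _ _ (by omega)

lemma abs_discrepancy_basis_le_of_add_threshold_lt
    (hL : IsBalanced α c (S.lower (S.threshold k))) (hU : IsBalanced α c (S.upper (S.threshold k)))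
    (hn : S.threshold k ≤ n) (hn' : n + S.threshold k < S.threshold (k + 1)) :
    |discrepancy α S.basis (S.threshold k) n| ≤ 2 * c := by
  have hM := S.threshold_le_sq k
  rcases le_total n (S.threshold k ^ 2) with hlow | hhigh
  · linarith [abs_discrepancy_basis_le_of_le_sq hL hn hlow, hL.nonneg]
  · rw [← discrepancy_add hM hhigh, two_mul]
    exact (abs_add_le _ _).trans (add_le_add (abs_discrepancy_basis_le_of_le_sq hL hM le_rfl)
      (abs_discrepancy_basis_le_of_sq_le hU hhigh hn'))

lemma threshold_le_sqrt (h : S.threshold (k + 1) ≤ n + S.threshold k) :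
    (S.threshold k : ℝ) ≤ √(n : ℝ) := by
  have hN := S.threshold_succ k
  have hM := S.threshold_le_sq k
  exact Real.le_sqrt_of_sq_le (by exact_mod_cast (by omega : S.threshold k ^ 2 ≤ n))

lemma abs_discrepancy_basis_threshold_le
    (hL : IsBalanced α c (S.lower (S.threshold k))) (hU : IsBalanced α c (S.upper (S.threshold k)))
    (hn : S.threshold k ≤ n) (hn' : n ≤ S.threshold (k + 1)) :
    |discrepancy α S.basis (S.threshold k) n| ≤ 2 * c + √(n : ℝ) + 1 := by
  rcases lt_or_ge (n + S.threshold k) (S.threshold (k + 1)) with hfar | hnear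
  · linarith [abs_discrepancy_basis_le_of_add_threshold_lt hL hU hn hfar, Real.sqrt_nonneg (n : ℝ)]
  have hN := S.threshold_succ k
  have hM := S.threshold_le_sq k
  obtain ⟨t, ht⟩ : ∃ t, t + S.threshold k + 1 = S.threshold (k + 1) :=
    ⟨S.threshold (k + 1) - S.threshold k - 1, by omega⟩
  have hstart := abs_discrepancy_basis_le_of_add_threshold_lt (n := t) hL hU (by omega) (by omega)
  have hend : |discrepancy α S.basis t n| ≤ (n : ℝ) - t :=
    abs_discrepancy_le hL.density_nonneg hL.density_le_one (by omega)
  have hlen : (n : ℝ) ≤ t + S.threshold k + 1 := by exact_mod_cast ht ▸ hn'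
  rw [← discrepancy_add (b := t) (by omega) (by omega)]
  linarith [abs_add_le (discrepancy α S.basis (S.threshold k) t) (discrepancy α S.basis t n),
    threshold_le_sqrt hnear]

lemma abs_discrepancy_basis_zero_le (hL : ∀ M ≥ S.seed, IsBalanced α c (S.lower M))
    (hU : ∀ M ≥ S.seed, IsBalanced α c (S.upper M)) (hn : S.threshold 1 < n) :
    |discrepancy α S.basis 0 n| ≤ 4 * c + 2 + 3 * √(n : ℝ) := by
  obtain ⟨k, hkn, hnk⟩ := exists_threshold_lt_le hn
  have hmono : S.threshold k ≤ S.threshold (k + 1) := S.strictMono_threshold.monotone k.le_succ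
  have hstage : ∀ j m, S.threshold j ≤ m → m ≤ S.threshold (j + 1) →
      |discrepancy α S.basis (S.threshold j) m| ≤ 2 * c + √(m : ℝ) + 1 := fun j m =>
    abs_discrepancy_basis_threshold_le (hL _ (S.seed_le_threshold j))
      (hU _ (S.seed_le_threshold j))
  have hsqrt : √(S.threshold (k + 1) : ℝ) ≤ √(n : ℝ) :=
    Real.sqrt_le_sqrt (by exact_mod_cast hkn.le)
  have hfirst : |discrepancy α S.basis 0 (S.threshold k)| ≤ √(n : ℝ) := by
    have hL₀ := hL _ le_rfl
    refine (abs_discrepancy_le hL₀.density_nonneg hL₀.density_le_one (Nat.zero_le _)).trans ?_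
    simpa using threshold_le_sqrt (hkn.le.trans (Nat.le_add_right _ _))
  have hsecond := hstage k _ hmono le_rfl
  have hthird := hstage (k + 1) n hkn.le hnk
  rw [← discrepancy_add (Nat.zero_le _) hkn.le, ← discrepancy_add (Nat.zero_le _) hmono]
  linarith [abs_add_three (discrepancy α S.basis 0 (S.threshold k))
    (discrepancy α S.basis (S.threshold k) (S.threshold (k + 1)))
    (discrepancy α S.basis (S.threshold (k + 1)) n)]

theorem tendsto_countingFn_basis_div (hL : ∀ M ≥ S.seed, IsBalanced α c (S.lower M))
    (hU : ∀ M ≥ S.seed, IsBalanced α c (S.upper M)) :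
    Tendsto (fun n : ℕ => (countingFn S.basis n : ℝ) / n) atTop (nhds α) := by
  refine tendsto_countingFn_div_of_discrepancy_isBigO_sqrt
    (Asymptotics.IsBigO.of_bound (4 * c + 5) ?_)
  filter_upwards [eventually_gt_atTop (S.threshold 1)] with n hn
  have hc : 0 ≤ c := (hL _ le_rfl).nonneg
  have hsqrt : 1 ≤ √(n : ℝ) := Real.one_le_sqrt.2 (by exact_mod_cast (by omega : 1 ≤ n))
  rw [Real.norm_eq_abs, Real.norm_of_nonneg (Real.sqrt_nonneg _)]
  calc |discrepancy α S.basis 0 n| ≤ 4 * c + 2 + 3 * √(n : ℝ) :=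
        abs_discrepancy_basis_zero_le hL hU hn
    _ ≤ (4 * c + 5) * √(n : ℝ) := by nlinarith

end Density

end Blueprint

section DisjointPair

/-- The blueprint built from two sets `F` and `G` with gaps at most `g`. The hole is placed at
`3 * M`, so that its translates by at most `M` stay in `(M, M ^ 2]`. -/
def patternBlueprint (F G : Set ℕ) (g : ℕ) : Blueprint where
  seed := 5 * g
  lower M := lowerPattern F g (3 * M)
  upper M := upperPattern G g (3 * M)

variable {F G : Set ℕ} {g : ℕ} {α c : ℝ}

lemma isAdmissible_patternBlueprint (hFG : Disjoint F G) (hF : IsSyndetic F g)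
    (hG : IsSyndetic G g) : (patternBlueprint F G g).IsAdmissible (2 * g) where
  two_mul_le_seed := by simp only [patternBlueprint]; omega
  disjoint _ _ := disjoint_lowerPattern_upperPattern hFG
  syndetic_lower _ _ := hF.lowerPattern
  syndetic_upper _ _ := hG.upperPattern
  exists_sub_eq M hM d hd hdM := by
    have hM : 5 * g ≤ M := hM
    have hg := hF.pos
    have hsq : 5 * M ≤ M ^ 2 := by nlinarith
    obtain ⟨hd₁, hd₂⟩ := abs_le.1 hdM
    obtain ⟨s, hs⟩ : ∃ s : ℕ, (s : ℤ) = 3 * M + d := ⟨(3 * M + d).toNat, by omega⟩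
    obtain ⟨b, hbL, hb⟩ := hF.lowerPattern_inter_Ico_nonempty (s := s) (q := 3 * M) (by omega)
    rw [Set.mem_Ico] at hb
    obtain ⟨e, he⟩ : ∃ e : ℕ, (b - e : ℤ) = d := ⟨(b - d).toNat, by omega⟩
    exact ⟨b, ⟨hbL, by omega, by omega⟩, e,
      ⟨mem_upperPattern.2 (Or.inl (by omega)), by omega, by omega⟩, he⟩

theorem exists_isMinimalAsymptoticBasisOfOrder_two_of_disjoint
    (hFG : Disjoint F G) (hF : IsSyndetic F g) (hG : IsSyndetic G g)
    (hFα : IsBalanced α c F) (hGα : IsBalanced α c G) :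
    ∃ A : Set ℕ, IsMinimalAsymptoticBasisOfOrder A 2 ∧
      Tendsto (fun n : ℕ => (countingFn A n : ℝ) / n) atTop (nhds α) :=
  ⟨(patternBlueprint F G g).basis,
    (isAdmissible_patternBlueprint hFG hF hG).isMinimalAsymptoticBasisOfOrder,
    Blueprint.tendsto_countingFn_basis_div (fun _ _ => hFα.lowerPattern)
      (fun _ _ => hGα.upperPattern)⟩

end DisjointPair

section Sturmian

/-- The Sturmian set of slope `α` and intercept `β`: the indices at which the sequence
`⌊α * n + β⌋` increases. -/
def sturmianSet (α β : ℝ) : Set ℕ := {n | ⌊α * n + β⌋ < ⌊α * (n + 1 : ℕ) + β⌋}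

variable {α β : ℝ}

lemma disjoint_sturmianSet_add (hα : α ≤ 1 / 2) :
    Disjoint (sturmianSet α β) (sturmianSet α (β + α)) := by
  refine Set.disjoint_left.2 fun n (hn : ⌊_⌋ < ⌊_⌋) (hn' : ⌊_⌋ < ⌊_⌋) => ?_
  have hshift : α * n + (β + α) = α * (n + 1 : ℕ) + β := by push_cast; ring
  have htwo : ⌊α * (n + 1 : ℕ) + (β + α)⌋ ≤ ⌊α * n + β⌋ + 1 := by
    rw [← Int.floor_add_one]
    refine Int.floor_le_floor ?_
    push_cast
    linarith
  rw [hshift] at hn'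
  omega

lemma ncard_sturmianSet_inter_Ico (hα₀ : 0 ≤ α) (hα₁ : α ≤ 1) {a b : ℕ} (hab : a ≤ b) :
    ((sturmianSet α β ∩ Set.Ico a b).ncard : ℤ) = ⌊α * b + β⌋ - ⌊α * a + β⌋ := by
  classical
  have hstep (n : ℕ) : ⌊α * (n + 1 : ℕ) + β⌋ - ⌊α * n + β⌋ =
      if n ∈ sturmianSet α β then 1 else 0 := by
    have hle : ⌊α * n + β⌋ ≤ ⌊α * (n + 1 : ℕ) + β⌋ := by gcongr; omega
    have hge : ⌊α * (n + 1 : ℕ) + β⌋ ≤ ⌊α * n + β⌋ + 1 := by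
      rw [← Int.floor_add_one]
      refine Int.floor_le_floor ?_
      push_cast
      linarith
    rw [sturmianSet, Set.mem_ofPred_eq]
    split_ifs <;> omega
  have hfilter : sturmianSet α β ∩ Set.Ico a b =
      ((Finset.Ico a b).filter (· ∈ sturmianSet α β) : Set ℕ) := by
    ext n
    simp [and_comm]
  rw [← Finset.sum_Ico_sub (fun n : ℕ => ⌊α * n + β⌋) hab, Finset.sum_congr rfl fun n _ => hstep n,
    Finset.sum_boole, hfilter, Set.ncard_coe_finset]

lemma isSyndetic_sturmianSet (hα₀ : 0 ≤ α) (hα₁ : α ≤ 1) {g : ℕ} (hg : 1 ≤ α * g) :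
    IsSyndetic (sturmianSet α β) g := by
  intro s
  have hfloor : ⌊α * s + β⌋ + 1 ≤ ⌊α * (s + g : ℕ) + β⌋ := by
    rw [← Int.floor_add_one]
    refine Int.floor_le_floor ?_
    push_cast
    linarith
  refine Set.nonempty_of_ncard_ne_zero fun hzero => ?_
  have := ncard_sturmianSet_inter_Ico (β := β) hα₀ hα₁ (Nat.le_add_right s g)
  omega

lemma isBalanced_sturmianSet (hα₀ : 0 ≤ α) (hα₁ : α ≤ 1) : IsBalanced α 1 (sturmianSet α β) := by
  intro a b hab
  have hcard := ncard_sturmianSet_inter_Ico (β := β) hα₀ hα₁ (Nat.add_le_add_right hab 1)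
  rw [Set.Ico_add_one_add_one_eq_Ioc] at hcard
  have hfract : discrepancy α (sturmianSet α β) a b =
      Int.fract (α * (a + 1 : ℕ) + β) - Int.fract (α * (b + 1 : ℕ) + β) := by
    rw [discrepancy, Int.fract, Int.fract, ← Int.cast_natCast (Set.ncard _), hcard]
    push_cast
    ring
  rw [hfract]
  exact abs_sub_le_of_nonneg_of_le (Int.fract_nonneg _) (Int.fract_lt_one _).le
    (Int.fract_nonneg _) (Int.fract_lt_one _).le

end Sturmian

end MinimalBasis

theorem erdos_nathanson_minimal_basis_order_two_density_alpha (α : ℝ)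
    (hα0 : 0 < α) (hα1 : α ≤ 1 / 2) :
    ∃ A : Set ℕ, IsMinimalAsymptoticBasisOfOrder A 2 ∧
      Tendsto (fun n : ℕ => (countingFn A n : ℝ) / (n : ℝ)) atTop (nhds α) := by
  open MinimalBasis in
  have hα_le_one : α ≤ 1 := by linarith
  obtain ⟨g, hg⟩ := exists_nat_gt (1 / α)
  have hαg : 1 ≤ α * g := ((div_lt_iff₀' hα0).1 hg).le
  exact exists_isMinimalAsymptoticBasisOfOrder_two_of_disjoint
    (disjoint_sturmianSet_add (β := 0) hα1)
    (isSyndetic_sturmianSet hα0.le hα_le_one hαg) (isSyndetic_sturmianSet hα0.le hα_le_one hαg)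
    (isBalanced_sturmianSet hα0.le hα_le_one) (isBalanced_sturmianSet hα0.le hα_le_one)
end

section
/- If A is a set of nonnegative integers such that A ∪ S is an asymptotic nonbasis of order 2 for every finite set S of nonnegative integers disjoint from A, then A is contained in a maximal asymptotic nonbasis of order 2. -/
open Pointwise Filter

/-!
Build `M ⊇ A` in stages, together with integers `n₀ < n₁ < ⋯`, the ones from `n₁` on being the
holes of `M + M`. To pass from the set `B` and `n = nₖ` to the next stage, adjoin the interval
`(n, 2n]` and let `n'` be the first integer beyond `2n` that is not a sum of two elements; it
exists because only finitely many integers have been adjoined to `A`. Then adjoin `n' - x` for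
each missing `x ≤ n`. As `n' > 2n`, these reflections exceed both `n` and `n' / 2`, so membership
up to `n` is unchanged and two reflections add up to more than `n'`. A sum equal to `n'` with one
reflection `n' - x` needs `x` itself, which is still missing, so `n'` remains a hole. The union
`M` is a nonbasis since it misses every hole, while adjoining a missing `b` fills every hole `nₖ`
with `k > b`. Keeping `0` in the set makes the integers of the adjoined intervals sums of two
elements.
-/

theorem isAsymptoticBasisOfOrder_two_iff {B : Set ℕ} :
    IsAsymptoticBasisOfOrder B 2 ↔ ∀ᶠ m in atTop, m ∈ B + B := by
  refine eventually_congr (Eventually.of_forall fun m => ⟨?_, ?_⟩)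
  · rintro ⟨c, hc, hm⟩
    exact ⟨c 0, hc 0, c 1, hc 1, by simpa using hm⟩
  · rintro ⟨x, hx, y, hy, hm⟩
    exact ⟨![x, y], by simp [Fin.forall_fin_two, hx, hy], by simpa using hm⟩

/-- A set that stays an asymptotic nonbasis of order `h` after adjoining finitely many integers,
whether or not they already belong to it. -/
def IsRobustNonbasis (B : Set ℕ) (h : ℕ) : Prop :=
  ∀ S : Set ℕ, S.Finite → ¬ IsAsymptoticBasisOfOrder (B ∪ S) h

namespace IsRobustNonbasis

variable {B : Set ℕ} {h : ℕ}

theorem of_disjoint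
    (hB : ∀ S : Set ℕ, S.Finite → Disjoint S B → ¬ IsAsymptoticBasisOfOrder (B ∪ S) h) :
    IsRobustNonbasis B h := fun S hS => by
  rw [← Set.union_sdiff_self]
  exact hB _ hS.sdiff Set.disjoint_sdiff_left

theorem not_isAsymptoticBasisOfOrder (hB : IsRobustNonbasis B h) :
    ¬ IsAsymptoticBasisOfOrder B h := by
  simpa only [Set.union_empty] using hB ∅ Set.finite_empty

theorem union {S : Set ℕ} (hB : IsRobustNonbasis B h) (hS : S.Finite) :
    IsRobustNonbasis (B ∪ S) h :=
  fun T hT => by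
    rw [Set.union_assoc]
    exact hB _ (hS.union hT)

end IsRobustNonbasis

theorem exists_first_notMem_gt {S : Set ℕ} (hS : ¬ ∀ᶠ m in atTop, m ∈ S) (N : ℕ) :
    ∃ p > N, p ∉ S ∧ Set.Ioo N p ⊆ S := by
  classical
  have hex : ∃ p > N, p ∉ S := frequently_atTop'.1 (not_eventually.1 hS) N
  obtain ⟨hNp, hpS⟩ := Nat.find_spec hex
  refine ⟨Nat.find hex, hNp, hpS, fun m hm => ?_⟩
  by_contra hmS
  exact Nat.find_min hex hm.2 ⟨hm.1, hmS⟩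

/-- `T` together with the reflections `p - x` of the integers `x ≤ n` missing from `T`, which makes
`p` a sum of two elements as soon as one of these `x` is adjoined. It is meant for `2 * n < p`, so
that the subtraction is not truncated and the reflections lie above `n`. -/
def adjoinReflections (T : Set ℕ) (n p : ℕ) : Set ℕ :=
  T ∪ (p - ·) '' (Set.Iic n \ T)

section AdjoinReflections

variable {T : Set ℕ} {n p : ℕ}

theorem subset_adjoinReflections : T ⊆ adjoinReflections T n p :=
  Set.subset_union_left

theorem sub_mem_adjoinReflections {x : ℕ} (hx : x ∈ Set.Iic n \ T) :
    p - x ∈ adjoinReflections T n p :=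
  Or.inr (Set.mem_image_of_mem _ hx)

theorem adjoinReflections_inter_Iic_subset (hp : 2 * n < p) :
    adjoinReflections T n p ∩ Set.Iic n ⊆ T := by
  rintro _ ⟨hx | ⟨x, ⟨hxn, -⟩, rfl⟩, hle⟩
  · exact hx
  · simp only [Set.mem_Iic] at hxn hle
    omega

theorem notMem_adjoinReflections_add_self (hp : 2 * n < p) (hpT : p ∉ T + T) :
    p ∉ adjoinReflections T n p + adjoinReflections T n p := by
  have reflection_add_ne {x y : ℕ} (hx : x ∈ Set.Iic n \ T) (hy : y ∈ T) : p - x + y ≠ p := by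
    intro hxy
    have hxn : x ≤ n := hx.1
    have hyx : y = x := by omega
    exact hx.2 (hyx ▸ hy)
  rintro ⟨y, hy | ⟨x, hx, rfl⟩, z, hz | ⟨w, hw, rfl⟩, hsum⟩
  · exact hpT ⟨y, hy, z, hz, hsum⟩
  · exact reflection_add_ne hw hy ((add_comm _ _).trans hsum)
  · exact reflection_add_ne hx hz hsum
  · have hxn : x ≤ n := hx.1
    have hwn : w ≤ n := hw.1
    dsimp only at hsum
    omega

theorem isRobustNonbasis_adjoinReflections {h : ℕ} (hT : IsRobustNonbasis T h) :
    IsRobustNonbasis (adjoinReflections T n p) h :=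
  hT.union ((Set.finite_Iic n).sdiff.image _)

end AdjoinReflections

/-- One stage of the construction: `C` extends `B` without changing it up to `n`, and `n'`
is the next hole of `C + C`, which each `x ≤ n` missing from `C` would fill. -/
structure IsExtension (B : Set ℕ) (n : ℕ) (C : Set ℕ) (n' : ℕ) : Prop where
  subset : B ⊆ C
  lt : n < n'
  inter_Iic_subset : C ∩ Set.Iic n ⊆ B
  sub_mem : ∀ x ∈ Set.Iic n \ C, n' - x ∈ C
  notMem_add_self : n' ∉ C + C
  Ioo_subset_add_self : Set.Ioo n n' ⊆ C + C

theorem IsRobustNonbasis.exists_isExtension {B : Set ℕ} (hB : IsRobustNonbasis B 2)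
    (h0 : 0 ∈ B) (n : ℕ) : ∃ C n', IsRobustNonbasis C 2 ∧ IsExtension B n C n' := by
  let T := B ∪ Set.Ioc n (2 * n)
  have hT : IsRobustNonbasis T 2 := hB.union (Set.finite_Ioc _ _)
  obtain ⟨p, hp, hpT, hgap⟩ := exists_first_notMem_gt
    (isAsymptoticBasisOfOrder_two_iff.not.1 hT.not_isAsymptoticBasisOfOrder) (2 * n)
  have hTC : T ⊆ adjoinReflections T n p := subset_adjoinReflections
  refine ⟨adjoinReflections T n p, p, isRobustNonbasis_adjoinReflections hT,
    { subset := Set.subset_union_left.trans hTC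
      lt := by omega
      inter_Iic_subset := fun x hx => ?_
      sub_mem := fun x hx => sub_mem_adjoinReflections ⟨hx.1, fun hxT => hx.2 (hTC hxT)⟩
      notMem_add_self := notMem_adjoinReflections_add_self hp hpT
      Ioo_subset_add_self := fun m hm => Set.add_subset_add hTC hTC ?_ }⟩
  · exact (adjoinReflections_inter_Iic_subset hp hx).resolve_right fun hIoc =>
      hIoc.1.not_ge hx.2
  · rcases le_or_gt m (2 * n) with hm2 | hm2
    · exact ⟨m, Or.inr ⟨hm.1, hm2⟩, 0, Or.inl h0, add_zero m⟩
    · exact hgap ⟨hm2, hm.2⟩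

theorem iUnion_inter_Iic_subset {α : Type*} [Preorder α] {B : ℕ → Set α} {n : ℕ → α}
    (hB : Monotone B) (hn : Monotone n) (hstep : ∀ k, B (k + 1) ∩ Set.Iic (n k) ⊆ B k) (k : ℕ) :
    (⋃ j, B j) ∩ Set.Iic (n k) ⊆ B k := by
  rintro x ⟨hxM, hxk⟩
  obtain ⟨j, hxj⟩ := Set.mem_iUnion.1 hxM
  have descend (i : ℕ) (hki : k ≤ i) (hxi : x ∈ B i) : x ∈ B k := by
    induction i, hki using Nat.le_induction with
    | base => exact hxi
    | succ i hki ih => exact ih (hstep i ⟨hxi, hxk.trans (hn hki)⟩)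
  exact descend (max j k) (le_max_right j k) (hB (le_max_left j k) hxj)

section ExtensionSequence

variable {B : ℕ → Set ℕ} {n : ℕ → ℕ}

theorem not_isAsymptoticBasisOfOrder_iUnion
    (h : ∀ k, IsExtension (B k) (n k) (B (k + 1)) (n (k + 1))) :
    ¬ IsAsymptoticBasisOfOrder (⋃ k, B k) 2 := by
  have hn : StrictMono n := strictMono_nat_of_lt_succ fun k => (h k).lt
  have hstable := iUnion_inter_Iic_subset (monotone_nat_of_le_succ fun k => (h k).subset)
    hn.monotone fun k => (h k).inter_Iic_subset
  have hhole (k : ℕ) : n (k + 1) ∉ (⋃ j, B j) + ⋃ j, B j := by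
    rintro ⟨x, hx, y, hy, hxy⟩
    exact (h k).notMem_add_self
      ⟨x, hstable _ ⟨hx, hxy ▸ Nat.le_add_right x y⟩,
        y, hstable _ ⟨hy, hxy ▸ Nat.le_add_left y x⟩, hxy⟩
  rw [isAsymptoticBasisOfOrder_two_iff, eventually_atTop]
  rintro ⟨N, hN⟩
  exact hhole N (hN _ ((Nat.le_succ N).trans (hn.id_le _)))

theorem isAsymptoticBasisOfOrder_iUnion_union_singleton
    (h : ∀ k, IsExtension (B k) (n k) (B (k + 1)) (n (k + 1))) {b : ℕ} (hb : b ∉ ⋃ k, B k) :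
    IsAsymptoticBasisOfOrder ((⋃ k, B k) ∪ {b}) 2 := by
  have hn : StrictMono n := strictMono_nat_of_lt_succ fun k => (h k).lt
  have hsub (k : ℕ) : B k ⊆ (⋃ j, B j) ∪ {b} :=
    (Set.subset_iUnion B k).trans Set.subset_union_left
  rw [isAsymptoticBasisOfOrder_two_iff]
  filter_upwards [eventually_gt_atTop (n b)] with m hm
  obtain ⟨k, hkm, hmk⟩ := hn.exists_between_of_tendsto_atTop hn.tendsto_atTop
    ((hn.monotone b.zero_le).trans_lt hm)
  have hbk : b ≤ k := Nat.lt_succ_iff.1 (hn.lt_iff_lt.1 (hm.trans_le hmk))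
  have hbn : b ≤ n k := hbk.trans (hn.id_le k)
  rcases hmk.lt_or_eq with hlt | rfl
  · exact Set.add_subset_add (hsub _) (hsub _) ((h k).Ioo_subset_add_self ⟨hkm, hlt⟩)
  · have hbB : b ∉ B (k + 1) := fun hmem => hb (Set.mem_iUnion_of_mem _ hmem)
    exact ⟨b, Or.inr rfl, n (k + 1) - b, hsub _ ((h k).sub_mem b ⟨hbn, hbB⟩),
      Nat.add_sub_cancel' (hbn.trans hkm.le)⟩

end ExtensionSequence

theorem contained_in_maximal_nonbasis (A : Set ℕ)
    (hA : ∀ S : Set ℕ, S.Finite → Disjoint S A →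
      ¬ IsAsymptoticBasisOfOrder (A ∪ S) 2) :
    ∃ M : Set ℕ, A ⊆ M ∧ IsMaximalAsymptoticNonbasisOfOrder M 2 := by
  let Stage := {B : Set ℕ // 0 ∈ B ∧ IsRobustNonbasis B 2} × ℕ
  have hstep (s : Stage) : ∃ t : Stage, IsExtension s.1 s.2 t.1 t.2 := by
    obtain ⟨⟨B, h0, hB⟩, n⟩ := s
    obtain ⟨C, n', hC, hext⟩ := hB.exists_isExtension h0 n
    exact ⟨(⟨C, hext.subset h0, hC⟩, n'), hext⟩
  choose next hnext using hstep
  have hA0 : IsRobustNonbasis (A ∪ {0}) 2 :=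
    (IsRobustNonbasis.of_disjoint hA).union (Set.finite_singleton 0)
  let s (k : ℕ) : Stage := next^[k] (⟨A ∪ {0}, Or.inr rfl, hA0⟩, 0)
  have hs (k : ℕ) : IsExtension (s k).1 (s k).2 (s (k + 1)).1 (s (k + 1)).2 := by
    simpa only [s, Function.iterate_succ_apply'] using hnext (s k)
  have hAs : A ⊆ ⋃ k, ((s k).1 : Set ℕ) :=
    Set.subset_union_left.trans (Set.subset_iUnion (fun k => ((s k).1 : Set ℕ)) 0)
  exact ⟨_, hAs, not_isAsymptoticBasisOfOrder_iUnion hs,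
    fun _ => isAsymptoticBasisOfOrder_iUnion_union_singleton hs⟩
end
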